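/- arXiv:1804.08068 — 4 statements merged into one kernel-verified Lean document; each statement's English description precedes it below -/
import Mathlib

section
/- Let U be a subset of the set of prime numbers ℙ such that the relative density δ(U) exists and equals γ > 0, and let V be a subset of ℕ. Then the set U/V = {u/v : u ∈ U, v ∈ V} is dense in ℝ_{>0} if and only if V is infinite. -/
open ArithmeticFunction MeasureTheory Filter Topology

/-- Fourier-type transform of the test function. -/
noncomputable def KK (φ : ℝ → ℂ) (t : ℝ) : ℂ := ∫ y : ℝ, φ y * Complex.exp (-(y * t) * Complex.I)

lemma GG_eq (s : ℂ) (hs : 1 < s.re) : vonMangoldt.LFunctionResidueClassAux (1 : ZMod 1) s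
    = LSeries (fun n => (Λ n : ℂ)) s - 1 / (s - 1) := by
  have := vonMangoldt.eqOn_LFunctionResidueClassAux (a := (1 : ZMod 1)) isUnit_one hs
  rw [this]
  have h : vonMangoldt.residueClass (1 : ZMod 1) = fun n => Λ n := by
    funext n
    simp [vonMangoldt.residueClass, Subsingleton.elim _ (1 : ZMod 1)]
  simp [h]

lemma term_aux (σ y : ℝ) (n : ℕ) : LSeries.term (fun n => (Λ n : ℂ)) (σ + y * Complex.I) n
    = ((Λ n * (n : ℝ) ^ (-σ) : ℝ) : ℂ) * Complex.exp (-(y * Real.log n) * Complex.I) := by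
  rcases eq_or_ne n 0 with rfl | hn
  · simp
  rw [LSeries.term_of_ne_zero hn]
  have hn' : (n : ℂ) ≠ 0 := by exact_mod_cast hn
  rw [div_eq_mul_inv, ← Complex.cpow_neg, Complex.ofReal_mul, mul_assoc]
  congr 1
  rw [neg_add, Complex.cpow_add _ _ hn', Complex.ofReal_cpow (by positivity)]
  push_cast
  congr 1
  rw [Complex.cpow_def_of_ne_zero hn', ← Complex.natCast_log]
  congr 1
  ring

lemma norm_exp_aux (a : ℝ) : ‖Complex.exp (-(a : ℂ) * Complex.I)‖ = 1 := by
  have := Complex.norm_exp_ofReal_mul_I (-a)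
  simpa using this

lemma norm_exp_aux2 (y t : ℝ) : ‖Complex.exp (-((y : ℂ) * t) * Complex.I)‖ = 1 := by
  have := norm_exp_aux (y * t)
  simpa using this

lemma norm_exp_aux3 (y t : ℝ) : ‖Complex.exp (((y : ℂ) * t) * Complex.I)‖ = 1 := by
  have := Complex.norm_exp_ofReal_mul_I (y * t)
  simpa using this

lemma summable_aux (σ : ℝ) (hσ : 1 < σ) : Summable (fun n : ℕ => Λ n * (n : ℝ) ^ (-σ)) := by
  have h := LSeriesSummable_vonMangoldt (s := (σ : ℂ)) (by simpa using hσ)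
  have h2 := h.norm
  refine h2.congr (fun n => ?_)
  have := term_aux σ 0 n
  simp only [Complex.ofReal_zero, zero_mul, add_zero, neg_zero, Complex.exp_zero, mul_one] at this
  rw [this, Complex.norm_real, Real.norm_of_nonneg]
  exact mul_nonneg vonMangoldt_nonneg (by positivity)

lemma lemA (φ : ℝ → ℂ) (hc : Continuous φ) (hs : HasCompactSupport φ) (σ L : ℝ) (hσ : 1 < σ) :
    HasSum (fun n : ℕ => ((Λ n * (n : ℝ) ^ (-σ) : ℝ) : ℂ) * KK φ (Real.log n - L))
      (∫ y : ℝ, φ y * Complex.exp ((y * L) * Complex.I) *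
        LSeries (fun n => (Λ n : ℂ)) (σ + y * Complex.I)) := by
  have hi : Integrable φ := hc.integrable_of_hasCompactSupport hs
  set F : ℕ → ℝ → ℂ := fun n y => φ y * Complex.exp ((y * L) * Complex.I) *
    LSeries.term (fun n => (Λ n : ℂ)) (σ + y * Complex.I) n with hF
  have hFe : ∀ n y, F n y = ((Λ n * (n : ℝ) ^ (-σ) : ℝ) : ℂ) *
      (φ y * Complex.exp (-(y * ((Real.log n - L : ℝ) : ℂ)) * Complex.I)) := by
    intro n y
    rw [hF]
    simp only
    rw [term_aux]
    have : Complex.exp (-(y * ((Real.log n - L : ℝ) : ℂ)) * Complex.I) =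
      Complex.exp ((y * L) * Complex.I) * Complex.exp (-(y * Real.log n) * Complex.I) := by
      rw [← Complex.exp_add]
      congr 1
      push_cast
      ring
    rw [this]
    ring
  have hn : ∀ n y, ‖F n y‖ = (Λ n * (n : ℝ) ^ (-σ)) * ‖φ y‖ := by
    intro n y
    rw [hFe, norm_mul, norm_mul, norm_exp_aux2, Complex.norm_real, Real.norm_of_nonneg, mul_one]
    exact mul_nonneg vonMangoldt_nonneg (by positivity)
  have hFi : ∀ n, Integrable (F n) := by
    intro n
    have : Continuous (F n) := by
      rw [show F n = _ from funext (hFe n)]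
      fun_prop
    refine (hi.norm.const_mul (Λ n * (n : ℝ) ^ (-σ))).mono' this.aestronglyMeasurable ?_
    exact Eventually.of_forall fun y => (hn n y).le
  have hS : Summable fun n => ∫ y, ‖F n y‖ := by
    simp_rw [hn, integral_const_mul]
    exact (summable_aux σ hσ).mul_right _
  have := hasSum_integral_of_summable_integral_norm hFi hS
  have e1 : (fun n : ℕ => ((Λ n * (n : ℝ) ^ (-σ) : ℝ) : ℂ) * KK φ (Real.log n - L)) =
      fun n => ∫ y, F n y := by
    funext n
    simp_rw [hFe, integral_const_mul]
    rfl
  have e2 : (fun y : ℝ => φ y * Complex.exp ((y * L) * Complex.I) *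
        LSeries (fun n => (Λ n : ℂ)) (σ + y * Complex.I)) = fun y => ∑' n, F n y := by
    funext y
    simp only [hF]
    rw [tsum_mul_left]
    rfl
  rw [e1, e2]
  exact this

lemma lemB (φ : ℝ → ℂ) (hc : Continuous φ) (hs : HasCompactSupport φ) (σ L : ℝ) (hσ : 1 < σ) :
    ∫ t in Set.Ioi (0 : ℝ), (Real.exp (-(σ - 1) * t) : ℂ) * KK φ (t - L) =
      ∫ y : ℝ, φ y * Complex.exp ((y * L) * Complex.I) * (1 / (σ + y * Complex.I - 1)) := by
  have hi : Integrable φ := hc.integrable_of_hasCompactSupport hs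
  have h1 : ∀ t : ℝ, (Real.exp (-(σ - 1) * t) : ℂ) * KK φ (t - L) =
      ∫ y : ℝ, (Real.exp (-(σ - 1) * t) : ℂ) *
        (φ y * Complex.exp (-(y * ((t - L : ℝ) : ℂ)) * Complex.I)) := by
    intro t
    rw [integral_const_mul]; rfl
  simp_rw [h1]
  have hE : Integrable (fun t : ℝ => Real.exp (-(σ - 1) * t)) (volume.restrict (Set.Ioi 0)) :=
    integrableOn_exp_mul_Ioi (by linarith) 0
  rw [integral_integral_swap]
  · congr 1
    funext y
    have h2 : ∀ t : ℝ, (Real.exp (-(σ - 1) * t) : ℂ) *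
        (φ y * Complex.exp (-(y * ((t - L : ℝ) : ℂ)) * Complex.I)) =
        (φ y * Complex.exp ((y * L) * Complex.I)) *
          Complex.exp (-(σ + y * Complex.I - 1) * t) := by
      intro t
      rw [mul_assoc, mul_left_comm]
      congr 1
      push_cast
      rw [← Complex.exp_add, ← Complex.exp_add]
      congr 1
      ring
    simp_rw [h2, integral_const_mul]
    congr 1
    rw [integral_exp_mul_complex_Ioi (by simp; linarith)]
    simp
    rw [neg_div, ← div_neg, one_div]
    congr 1
    ring
  · have h3 := hE.mul_prod (μ := volume.restrict (Set.Ioi (0 : ℝ))) hi.norm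
    refine h3.mono' ?_ ?_
    · apply Continuous.aestronglyMeasurable
      unfold Function.uncurry
      fun_prop
    · refine Eventually.of_forall fun p => ?_
      simp only [Function.uncurry]
      rw [norm_mul, norm_mul, norm_exp_aux2, Complex.norm_real, Real.norm_of_nonneg (by positivity)]
      simp

lemma integral_K (φ : ℝ → ℂ) (hc : Continuous φ) (hs : HasCompactSupport φ)
    (hK : Integrable (KK φ)) : ∫ t, KK φ t = 2 * Real.pi * φ 0 := by
  have hi : Integrable φ := hc.integrable_of_hasCompactSupport hs
  have hF : FourierTransform.fourier φ = fun w => KK φ (2 * Real.pi * w) := by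
    funext w
    rw [Real.fourier_real_eq_integral_exp_smul, KK]
    congr 1
    funext y
    rw [smul_eq_mul, mul_comm]
    congr 2
    push_cast
    ring
  have hFi : Integrable (FourierTransform.fourier φ) := by
    rw [hF]
    exact hK.comp_mul_left' (by positivity)
  have := congrFun (hc.fourierInv_fourier_eq hi hFi) 0
  rw [Real.fourierInv_eq', hF] at this
  simp only [inner_zero_right, mul_zero, Complex.ofReal_zero, zero_mul, Complex.exp_zero,
    one_smul] at this
  rw [Measure.integral_comp_mul_left (fun x => KK φ x)] at this
  rw [← this, abs_of_pos (by positivity)]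
  simp only [Complex.real_smul]
  push_cast
  field_simp

lemma lemRL (φ : ℝ → ℂ) : Tendsto (fun L : ℝ => ∫ y : ℝ, φ y * Complex.exp ((y * L) * Complex.I))
    atTop (𝓝 0) := by
  have h := Real.tendsto_integral_exp_smul_cocompact φ
  have h2 : Tendsto (fun L : ℝ => -L / (2 * Real.pi)) atTop (cocompact ℝ) := by
    refine Tendsto.mono_right ?_ atBot_le_cocompact
    exact tendsto_neg_atTop_atBot.atBot_div_const (by positivity)
  refine (h.comp h2).congr fun L => ?_
  simp only [Function.comp]
  congr 1
  funext y
  rw [Circle.smul_def, Real.fourierChar_apply, smul_eq_mul, mul_comm]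
  congr 2
  push_cast
  field_simp
lemma lemG (φ : ℝ → ℂ) (hc : Continuous φ) (hs : HasCompactSupport φ) (L : ℝ) :
    ContinuousOn (fun σ : ℝ => ∫ y : ℝ, φ y * Complex.exp ((y * L) * Complex.I) *
      vonMangoldt.LFunctionResidueClassAux (1 : ZMod 1) (σ + y * Complex.I)) (Set.Ici 1) := by
  refine continuousOn_integral_of_compact_support (k := tsupport φ) hs ?_ ?_
  · have h := vonMangoldt.continuousOn_LFunctionResidueClassAux (1 : ZMod 1)
    have h2 : ContinuousOn (fun p : ℝ × ℝ =>
        vonMangoldt.LFunctionResidueClassAux (1 : ZMod 1) (p.1 + p.2 * Complex.I))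
        (Set.Ici 1 ×ˢ Set.univ) := by
      refine h.comp (f := fun p : ℝ × ℝ => (p.1 + p.2 * Complex.I : ℂ)) (by fun_prop) ?_
      intro p hp
      simpa using hp.1
    unfold Function.uncurry
    refine ContinuousOn.mul ?_ h2
    fun_prop
  · intro σ y _ hy
    simp [image_eq_zero_of_notMem_tsupport hy]

/-- weighted von Mangoldt sum in a logarithmic window -/
noncomputable def WW (η L : ℝ) : ℝ :=
  ∑ n ∈ (Finset.Icc 1 ⌊Real.exp (L + η)⌋₊).filter (fun n : ℕ => L - η ≤ Real.log n), Λ n / n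

lemma lemUp (k : ℝ → ℝ) (η M : ℝ) (hM : 0 ≤ M) (hk0 : ∀ t, η < |t| → k t ≤ 0) (hkM : ∀ t, k t ≤ M)
    (σ L a : ℝ) (hσ : 1 < σ)
    (ha : HasSum (fun n : ℕ => (Λ n * (n : ℝ) ^ (-σ)) * k (Real.log n - L)) a) :
    a ≤ M * WW η L := by
  set S := (Finset.Icc 1 ⌊Real.exp (L + η)⌋₊).filter (fun n : ℕ => L - η ≤ Real.log n) with hS
  have h2 : HasSum (fun n : ℕ => if n ∈ S then M * (Λ n / n) else 0) (M * WW η L) := by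
    have := hasSum_sum_of_ne_finset_zero (L := SummationFilter.unconditional ℕ) (f := fun n : ℕ => if n ∈ S then M * (Λ n / n) else 0)
      (s := S) (by intro b hb; simp [hb])
    convert this using 1
    rw [WW, Finset.mul_sum]
    refine Finset.sum_congr rfl ?_
    intro n hn
    rw [if_pos hn]
  refine hasSum_le ?_ ha h2
  intro n
  have hL : 0 ≤ Λ n := vonMangoldt_nonneg
  have hp : 0 ≤ (n : ℝ) ^ (-σ) := by positivity
  split_ifs with h
  · rw [hS, Finset.mem_filter, Finset.mem_Icc] at h
    have hn1 : (1 : ℝ) ≤ n := by exact_mod_cast h.1.1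
    have h3 : (n : ℝ) ^ (-σ) ≤ (n : ℝ)⁻¹ := by
      rw [← Real.rpow_neg_one]
      exact Real.rpow_le_rpow_of_exponent_le hn1 (by linarith)
    calc Λ n * (n : ℝ) ^ (-σ) * k (Real.log n - L) ≤ Λ n * (n : ℝ) ^ (-σ) * M := by
          gcongr; exact hkM _
      _ ≤ Λ n * (n : ℝ)⁻¹ * M := by gcongr
      _ = _ := by rw [div_eq_mul_inv]; ring
  · rcases Nat.eq_zero_or_pos n with rfl | hn
    · simp
    have hn' : (0 : ℝ) < n := by exact_mod_cast hn
    refine mul_nonpos_of_nonneg_of_nonpos (by positivity) (hk0 _ ?_)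
    by_contra hcon
    push Not at hcon
    rw [abs_le] at hcon
    apply h
    rw [hS, Finset.mem_filter, Finset.mem_Icc]
    refine ⟨⟨hn, ?_⟩, by linarith [hcon.1]⟩
    apply Nat.le_floor
    rw [← Real.log_le_iff_le_exp hn']
    linarith [hcon.2]

lemma lemIneq (φ : ℝ → ℂ) (hc : Continuous φ) (hs : HasCompactSupport φ) (k : ℝ → ℝ) (η M : ℝ)
    (hM : 0 ≤ M) (hk0 : ∀ t, η < |t| → k t ≤ 0) (hkM : ∀ t, k t ≤ M)
    (hK : ∀ t, KK φ t = k t) (hki : Integrable k) (L : ℝ) :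
    (∫ y : ℝ, φ y * Complex.exp ((y * L) * Complex.I) *
      vonMangoldt.LFunctionResidueClassAux (1 : ZMod 1) ((1 : ℝ) + y * Complex.I)).re +
      ∫ t in Set.Ioi (-L), k t ≤ M * WW η L := by
  have hshift : ∫ t in Set.Ioi (-L), k t = ∫ t in Set.Ioi (0 : ℝ), k (t - L) := by
    rw [← integral_indicator measurableSet_Ioi, ← integral_indicator measurableSet_Ioi,
      ← integral_sub_right_eq_self _ L]
    congr 1
    funext t
    simp only [Set.indicator, Set.mem_Ioi]
    congr 1
    rw [eq_iff_iff]
    constructor <;> intro h <;> linarith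
  rw [hshift]
  have hki' : Integrable (fun t => k (t - L)) := hki.comp_sub_right L
  have hT1 := ((lemG φ hc hs L) 1 (Set.mem_Ici.2 le_rfl)).mono_left
    (nhdsWithin_mono 1 Set.Ioi_subset_Ici_self)
  have hT1' := (Complex.continuous_re.tendsto _).comp hT1
  have hT2 : Tendsto (fun σ : ℝ => ∫ t in Set.Ioi (0 : ℝ), Real.exp (-(σ - 1) * t) * k (t - L))
      (𝓝[>] 1) (𝓝 (∫ t in Set.Ioi (0 : ℝ), k (t - L))) := by
    refine tendsto_integral_filter_of_dominated_convergence (fun t => ‖k (t - L)‖) ?_ ?_ ?_ ?_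
    · refine Eventually.of_forall fun σ => ?_
      exact (Continuous.aestronglyMeasurable (by fun_prop)).mul hki'.1.restrict
    · filter_upwards [self_mem_nhdsWithin] with σ hσ
      filter_upwards [ae_restrict_mem measurableSet_Ioi] with t ht
      rw [norm_mul, Real.norm_of_nonneg (by positivity)]
      refine mul_le_of_le_one_left (norm_nonneg _) ?_
      rw [Real.exp_le_one_iff]
      have h1 : 0 < σ - 1 := sub_pos.2 hσ
      have h2 : 0 < t := ht
      nlinarith
    · exact hki'.norm.restrict
    · refine Eventually.of_forall fun t => ?_
      have : Tendsto (fun σ : ℝ => Real.exp (-(σ - 1) * t) * k (t - L)) (𝓝 1)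
          (𝓝 (Real.exp (-(1 - 1) * t) * k (t - L))) := by
        apply Continuous.tendsto (f := fun σ : ℝ => Real.exp (-(σ - 1) * t) * k (t - L))
        fun_prop
      simp only [sub_self, neg_zero, zero_mul, Real.exp_zero, one_mul] at this
      exact this.mono_left nhdsWithin_le_nhds
  refine le_of_tendsto (hT1'.add hT2) ?_
  filter_upwards [self_mem_nhdsWithin] with σ hσ
  have hσ : 1 < σ := hσ
  have hA := lemA φ hc hs σ L hσ
  have hB := lemB φ hc hs σ L hσ
  simp_rw [hK] at hA hB
  have hA' := Complex.hasSum_re hA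
  simp only [← Complex.ofReal_mul, Complex.ofReal_re] at hA'
  refine le_trans (le_of_eq ?_) (lemUp k η M hM hk0 hkM σ L _ hσ hA')
  have hG : ∀ y : ℝ, φ y * Complex.exp ((y * L) * Complex.I) *
        LSeries (fun n => (Λ n : ℂ)) (σ + y * Complex.I) =
      φ y * Complex.exp ((y * L) * Complex.I) *
      vonMangoldt.LFunctionResidueClassAux (1 : ZMod 1) (σ + y * Complex.I) +
      φ y * Complex.exp ((y * L) * Complex.I) * (1 / (σ + y * Complex.I - 1)) := by
    intro y
    rw [GG_eq _ (by simpa using hσ)]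
    ring
  simp only [Complex.ofReal_mul]
  simp_rw [hG]
  rw [integral_add, Complex.add_re, ← hB]
  · congr 1
    simp only [← Complex.ofReal_mul]
    rw [integral_complex_ofReal, Complex.ofReal_re]
  · apply Continuous.integrable_of_hasCompactSupport
    · have h := vonMangoldt.continuousOn_LFunctionResidueClassAux (1 : ZMod 1)
      have h2 : Continuous (fun y : ℝ =>
          vonMangoldt.LFunctionResidueClassAux (1 : ZMod 1) (σ + y * Complex.I)) := by
        refine h.comp_continuous (by fun_prop) ?_
        intro p
        simpa using hσ.le
      fun_prop
    · exact (hs.mul_right).mul_right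
  · apply Continuous.integrable_of_hasCompactSupport
    · have : ∀ y : ℝ, (σ + y * Complex.I - 1 : ℂ) ≠ 0 := by
        intro y h
        have := congrArg Complex.re h
        simp at this
        linarith
      fun_prop (disch := exact this)
    · exact (hs.mul_right).mul_right

lemma lemTaub (φ : ℝ → ℂ) (hc : Continuous φ) (hs : HasCompactSupport φ) (k : ℝ → ℝ) (η M c₀ : ℝ)
    (hM : 0 < M) (hk0 : ∀ t, η < |t| → k t ≤ 0) (hkM : ∀ t, k t ≤ M)
    (hK : ∀ t, KK φ t = k t) (hki : Integrable k) (hφ : φ 0 = c₀) (hc₀ : 0 < c₀) :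
    ∃ c : ℝ, 0 < c ∧ ∀ᶠ L in atTop, c ≤ WW η L := by
  have hK' : KK φ = fun t => (k t : ℂ) := funext hK
  have hint : ∫ t, k t = 2 * Real.pi * c₀ := by
    have := integral_K φ hc hs (by rw [hK']; exact hki.ofReal)
    simp_rw [hK, hφ, integral_complex_ofReal] at this
    exact_mod_cast this
  have hR := lemRL (fun y => φ y *
    vonMangoldt.LFunctionResidueClassAux (1 : ZMod 1) ((1 : ℝ) + y * Complex.I))
  have hR' := (Complex.continuous_re.tendsto _).comp hR
  have hC := (aecover_Ioi (μ := (volume : Measure ℝ))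
    (tendsto_neg_atTop_atBot (G := ℝ))).integral_tendsto_of_countably_generated hki
  rw [hint] at hC
  have hT := hR'.add hC
  simp only [Complex.zero_re, zero_add] at hT
  have hpos : 0 < Real.pi * c₀ := mul_pos Real.pi_pos hc₀
  refine ⟨Real.pi * c₀ / M, by positivity, ?_⟩
  filter_upwards [hT.eventually (lt_mem_nhds (show Real.pi * c₀ < 2 * Real.pi * c₀ by linarith))]
    with L hL
  have := lemIneq φ hc hs k η M hM.le hk0 hkM hK hki L
  rw [div_le_iff₀' hM]
  refine le_trans hL.le (le_trans (le_of_eq ?_) this)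
  simp only [Function.comp]
  congr 3
  funext y
  ring
noncomputable def gB (B u : ℝ) : ℝ := (B - u) + Real.sin (2 * Real.pi / B * u) / (2 * Real.pi / B)

noncomputable def phiR (B y : ℝ) : ℝ := gB B (min |y| B)

lemma gB_cont (B : ℝ) : Continuous (gB B) := by unfold gB; fun_prop

lemma phiR_cont (B : ℝ) : Continuous (phiR B) := by
  unfold phiR
  exact (gB_cont B).comp (by fun_prop)

lemma gB_self (B : ℝ) (hB : 0 < B) : gB B B = 0 := by
  unfold gB
  rw [div_mul_cancel₀ _ hB.ne']
  simp

lemma phiR_zero (B : ℝ) (hB : 0 < B) (y : ℝ) (hy : B ≤ |y|) : phiR B y = 0 := by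
  rw [phiR, min_eq_right hy, gB_self B hB]

lemma phiR_supp (B : ℝ) (hB : 0 < B) : HasCompactSupport (fun y => (phiR B y : ℂ)) := by
  refine HasCompactSupport.of_support_subset_isCompact (isCompact_Icc (a := -B) (b := B)) ?_
  intro y hy
  rw [Function.mem_support] at hy
  rw [Set.mem_Icc, ← abs_le]
  by_contra h
  push Not at h
  exact hy (by rw [phiR_zero B hB y h.le]; simp)

noncomputable def kB (B t : ℝ) : ℝ := ∫ y : ℝ, phiR B y * Real.cos (y * t)

lemma phiR_int (B : ℝ) (hB : 0 < B) : Integrable (phiR B) := by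
  have h0 : Integrable (fun y => (phiR B y : ℂ)) :=
    (Complex.continuous_ofReal.comp (phiR_cont B)).integrable_of_hasCompactSupport (phiR_supp B hB)
  have := h0.re
  simpa using this

lemma KK_eq (B : ℝ) (hB : 0 < B) (t : ℝ) : KK (fun y => (phiR B y : ℂ)) t = kB B t := by
  have hi := phiR_int B hB
  have h1 : Integrable (fun y : ℝ => phiR B y * Real.cos (y * t)) := by
    refine hi.mul_bdd (c := 1) (by fun_prop) ?_
    exact Eventually.of_forall fun y => Real.abs_cos_le_one _
  have h2 : Integrable (fun y : ℝ => phiR B y * Real.sin (y * t)) := by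
    refine hi.mul_bdd (c := 1) (by fun_prop) ?_
    exact Eventually.of_forall fun y => Real.abs_sin_le_one _
  have hodd : ∫ y : ℝ, phiR B y * Real.sin (y * t) = 0 := by
    have := integral_neg_eq_self (fun y : ℝ => phiR B y * Real.sin (y * t)) volume
    have h3 : ∀ y : ℝ, phiR B (-y) * Real.sin (-y * t) = -(phiR B y * Real.sin (y * t)) := by
      intro y
      simp [phiR]
    simp_rw [h3, integral_neg] at this
    linarith
  have he : ∀ y : ℝ, (phiR B y : ℂ) * Complex.exp (-(y * t) * Complex.I) =
      ((phiR B y * Real.cos (y * t) : ℝ) : ℂ) -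
      ((phiR B y * Real.sin (y * t) : ℝ) : ℂ) * Complex.I := by
    intro y
    rw [Complex.exp_mul_I]
    simp only [Complex.cos_neg, Complex.sin_neg]
    push_cast
    ring
  rw [KK]
  simp_rw [he]
  rw [integral_sub h1.ofReal (h2.ofReal.mul_const _), integral_mul_const, integral_complex_ofReal,
    integral_complex_ofReal, hodd]
  simp [kB]

lemma kB_eq (B : ℝ) (hB : 0 < B) (t : ℝ) :
    kB B t = 2 * ∫ u in (0 : ℝ)..B, gB B u * Real.cos (u * t) := by
  have h1 : ∀ y : ℝ, phiR B y * Real.cos (y * t) =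
      (fun u => gB B (min u B) * Real.cos (u * t)) |y| := by
    intro y
    simp only [phiR]
    congr 1
    rcases abs_cases y with h | h
    · rw [h.1]
    · rw [h.1, neg_mul, Real.cos_neg]
  rw [kB]
  simp_rw [h1]
  rw [integral_comp_abs (f := fun u => gB B (min u B) * Real.cos (u * t))]
  congr 1
  rw [intervalIntegral.integral_of_le hB.le]
  rw [setIntegral_eq_of_subset_of_forall_sdiff_eq_zero (s := Set.Ioc 0 B) (t := Set.Ioi 0)
    measurableSet_Ioi Set.Ioc_subset_Ioi_self]
  · refine setIntegral_congr_fun measurableSet_Ioc ?_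
    intro u hu
    simp only
    rw [min_eq_left hu.2]
  · intro u hu
    have : B < u := by
      by_contra h
      exact hu.2 ⟨hu.1, not_lt.1 h⟩
    rw [min_eq_right this.le, gB_self B hB, zero_mul]

lemma kB_formula (B : ℝ) (hB : 0 < B) (t : ℝ) (ht : 2 * Real.pi / B < |t|) :
    kB B t = 2 * (1 - Real.cos (B * t)) * (2 * Real.pi / B) ^ 2 /
      (t ^ 2 * ((2 * Real.pi / B) ^ 2 - t ^ 2)) := by
  rw [kB_eq B hB]
  unfold gB
  have hηB : 2 * Real.pi / B * B = 2 * Real.pi := by field_simp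
  set η := 2 * Real.pi / B with hη
  have hη0 : 0 < η := by positivity
  have ht0 : t ≠ 0 := by
    rintro rfl
    simp at ht
    linarith
  have h1 : η + t ≠ 0 := by
    intro h
    have : t = -η := by linarith
    rw [this, abs_neg, abs_of_pos hη0] at ht
    exact lt_irrefl _ ht
  have h2 : η - t ≠ 0 := by
    intro h
    have : t = η := by linarith
    rw [this, abs_of_pos hη0] at ht
    exact lt_irrefl _ ht
  have hd : ∀ u : ℝ, HasDerivAt (fun u : ℝ => (B - u) * Real.sin (u * t) / t
      - Real.cos (u * t) / t ^ 2 - (Real.cos ((η + t) * u) / (2 * (η + t))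
        + Real.cos ((η - t) * u) / (2 * (η - t))) / η)
      ((B - u + Real.sin (η * u) / η) * Real.cos (u * t)) u := by
    intro u
    have a1 : HasDerivAt (fun u : ℝ => u * t) t u := by simpa using (hasDerivAt_id u).mul_const t
    have a2 : HasDerivAt (fun u : ℝ => (η + t) * u) (η + t) u := by
      simpa using (hasDerivAt_id u).const_mul (η + t)
    have a3 : HasDerivAt (fun u : ℝ => (η - t) * u) (η - t) u := by
      simpa using (hasDerivAt_id u).const_mul (η - t)
    have a4 : HasDerivAt (fun u : ℝ => B - u) (-1) u := by
      simpa using (hasDerivAt_id u).const_sub B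
    have := (((a4.mul a1.sin).div_const t).sub (a1.cos.div_const (t ^ 2))).sub
      (((a2.cos.div_const (2 * (η + t))).add (a3.cos.div_const (2 * (η - t)))).div_const η)
    refine this.congr_deriv ?_
    have e1 : Real.sin ((η + t) * u) = Real.sin (η * u) * Real.cos (u * t) +
      Real.cos (η * u) * Real.sin (u * t) := by
      rw [← Real.sin_add]; congr 1; ring
    have e2 : Real.sin ((η - t) * u) = Real.sin (η * u) * Real.cos (u * t) -
      Real.cos (η * u) * Real.sin (u * t) := by
      rw [← Real.sin_sub]; congr 1; ring
    rw [e1, e2]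
    field_simp
    ring
  rw [intervalIntegral.integral_eq_sub_of_hasDerivAt (fun u _ => hd u)
    (Continuous.intervalIntegrable (by fun_prop) _ _)]
  have e3 : Real.cos ((η + t) * B) = Real.cos (B * t) := by
    rw [add_mul, hηB, mul_comm t B, add_comm, Real.cos_add_two_pi]
  have e4 : Real.cos ((η - t) * B) = Real.cos (B * t) := by
    rw [sub_mul, hηB, mul_comm t B, Real.cos_two_pi_sub]
  rw [e3, e4]
  simp only [sub_self, zero_mul, zero_div, mul_zero, Real.cos_zero, Real.sin_zero]
  have h3 : η ^ 2 - t ^ 2 ≠ 0 := by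
    rw [sq_sub_sq]
    exact mul_ne_zero h1 h2
  rw [sq_sub_sq]
  field_simp
  ring

lemma kB_nonpos (B : ℝ) (hB : 0 < B) (t : ℝ) (ht : 2 * Real.pi / B < |t|) : kB B t ≤ 0 := by
  rw [kB_formula B hB t ht]
  have h0 : 0 < 2 * Real.pi / B := by positivity
  have h1 : (2 * Real.pi / B) ^ 2 - t ^ 2 < 0 := by
    rw [← sq_abs t]; nlinarith
  have h2 := Real.cos_le_one (B * t)
  apply div_nonpos_of_nonneg_of_nonpos
  · have : 0 ≤ 1 - Real.cos (B * t) := by linarith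
    positivity
  · exact mul_nonpos_of_nonneg_of_nonpos (by positivity) h1.le

lemma kB_bdd (B : ℝ) (hB : 0 < B) (t : ℝ) : |kB B t| ≤ ∫ y, |phiR B y| := by
  rw [kB]
  rw [← Real.norm_eq_abs]
  refine norm_integral_le_of_norm_le (phiR_int B hB).abs ?_
  refine Eventually.of_forall fun y => ?_
  rw [norm_mul]
  exact mul_le_of_le_one_right (abs_nonneg _) (Real.abs_cos_le_one _)

lemma kB_cont (B : ℝ) (hB : 0 < B) : Continuous (kB B) := by
  unfold kB
  have := phiR_cont B
  refine continuous_of_dominated (bound := fun y => |phiR B y|) ?_ ?_ (phiR_int B hB).abs ?_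
  · intro t
    exact Continuous.aestronglyMeasurable (by fun_prop)
  · intro t
    refine Eventually.of_forall fun y => ?_
    rw [norm_mul]
    exact mul_le_of_le_one_right (abs_nonneg _) (Real.abs_cos_le_one _)
  · exact Eventually.of_forall fun y => by fun_prop

lemma kB_int (B : ℝ) (hB : 0 < B) : Integrable (kB B) := by
  set M := ∫ y, |phiR B y| with hM
  have hM0 : 0 ≤ M := integral_nonneg fun _ => abs_nonneg _
  set η := 2 * Real.pi / B with hη
  have hη0 : 0 < η := by positivity
  refine (integrable_inv_one_add_sq.const_mul
    ((1 + 4 * η ^ 2) * M + 4 / 3 * (1 + 1 / (4 * η ^ 2)))).mono'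
    (kB_cont B hB).aestronglyMeasurable (Eventually.of_forall fun t => ?_)
  rw [← div_eq_mul_inv, le_div_iff₀ (by positivity), Real.norm_eq_abs]
  have hb := kB_bdd B hB t
  rw [← hM] at hb
  have hp : 0 ≤ 4 / 3 * (1 + 1 / (4 * η ^ 2)) := by positivity
  have hp2 : 0 ≤ (1 + 4 * η ^ 2) * M := by positivity
  rcases le_or_gt |t| (2 * η) with h | h
  · have : t ^ 2 ≤ 4 * η ^ 2 := by
      rw [← sq_abs t]; nlinarith [abs_nonneg t]
    have : |kB B t| * (1 + t ^ 2) ≤ M * (1 + 4 * η ^ 2) := by gcongr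
    linarith
  · have ht : 4 * η ^ 2 < t ^ 2 := by
      rw [← sq_abs t]; nlinarith [abs_nonneg t]
    have hpos : 0 < t ^ 2 := lt_trans (by positivity) ht
    have : |kB B t| ≤ 4 / 3 / t ^ 2 := by
      rw [kB_formula B hB t (by linarith), ← hη, abs_div, abs_mul, abs_mul, abs_mul]
      rw [abs_of_neg (show η ^ 2 - t ^ 2 < 0 by nlinarith), abs_of_pos hpos,
        abs_of_pos (show 0 < η ^ 2 by positivity), abs_of_nonneg
        (show 0 ≤ 1 - Real.cos (B * t) by linarith [Real.cos_le_one (B * t)]), abs_two]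
      rw [div_le_div_iff₀ (mul_pos hpos (by nlinarith)) hpos]
      have hc : 1 - Real.cos (B * t) ≤ 2 := by linarith [Real.neg_one_le_cos (B * t)]
      have h5 : 2 * (1 - Real.cos (B * t)) * η ^ 2 ≤ 2 * 2 * η ^ 2 := by gcongr
      have h6 : 2 * 2 * η ^ 2 ≤ 4 / 3 * -(η ^ 2 - t ^ 2) := by linarith
      calc _ ≤ (4 / 3 * -(η ^ 2 - t ^ 2)) * t ^ 2 :=
            mul_le_mul_of_nonneg_right (h5.trans h6) hpos.le
        _ = _ := by ring
    have h7 : |kB B t| * (1 + t ^ 2) ≤ 4 / 3 / t ^ 2 * (1 + t ^ 2) := by gcongr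
    have h8 : 4 / 3 / t ^ 2 * (1 + t ^ 2) ≤ 4 / 3 * (1 + 1 / (4 * η ^ 2)) := by
      have : 1 / t ^ 2 ≤ 1 / (4 * η ^ 2) := one_div_le_one_div_of_le (by positivity) ht.le
      have e : 4 / 3 / t ^ 2 * (1 + t ^ 2) = 4 / 3 * (1 + 1 / t ^ 2) := by
        have : t ≠ 0 := by rintro rfl; simp at hpos
        field_simp
        ring
      rw [e]
      gcongr
    linarith

lemma WW_lower (η : ℝ) (hη : 0 < η) : ∃ c : ℝ, 0 < c ∧ ∀ᶠ L in atTop, c ≤ WW η L := by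
  set B := 2 * Real.pi / η with hB
  have hB0 : 0 < B := by positivity
  have hη' : 2 * Real.pi / B = η := by rw [hB]; field_simp
  have hM0 : 0 ≤ ∫ y, |phiR B y| := integral_nonneg fun _ => abs_nonneg _
  refine lemTaub (fun y => (phiR B y : ℂ)) (Complex.continuous_ofReal.comp (phiR_cont B))
    (phiR_supp B hB0) (kB B) η ((∫ y, |phiR B y|) + 1) B (by linarith) ?_ ?_ (KK_eq B hB0)
    (kB_int B hB0) ?_ hB0
  · intro t ht
    exact kB_nonpos B hB0 t (by rwa [hη'])
  · intro t
    have := (abs_le.1 (kB_bdd B hB0 t)).2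
    linarith
  · simp [phiR, gB, min_eq_left hB0.le]
lemma psi_short (a b : ℝ) (ha : 0 < a) (hab : a < b) :
    ∃ c : ℝ, 0 < c ∧ ∀ᶠ x : ℝ in atTop, c * x ≤ Chebyshev.psi (b * x) - Chebyshev.psi (a * x) := by
  have hb : 0 < b := ha.trans hab
  have hlab : Real.log a < Real.log b := Real.log_lt_log ha hab
  set η := (Real.log b - Real.log a) / 3 with hη
  have hη0 : 0 < η := by rw [hη]; linarith
  obtain ⟨c, hc, hW⟩ := WW_lower η hη0
  have hL : Tendsto (fun x : ℝ => Real.log (b * x) - η) atTop atTop :=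
    tendsto_atTop_add_const_right _ _ (Real.tendsto_log_atTop.comp
      (tendsto_id.const_mul_atTop hb))
  refine ⟨c * a, by positivity, ?_⟩
  filter_upwards [hL.eventually hW, eventually_gt_atTop 0] with x hx hx0
  have hbx : 0 < b * x := by positivity
  have hax : 0 < a * x := by positivity
  have haxb : a * x ≤ b * x := by gcongr
  unfold WW at hx
  rw [sub_add_cancel, Real.exp_log hbx] at hx
  have e1 : Real.log (b * x) = Real.log b + Real.log x := Real.log_mul hb.ne' hx0.ne'
  have e2 : Real.log (a * x) = Real.log a + Real.log x := Real.log_mul ha.ne' hx0.ne'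
  have hsub : (Finset.Icc 1 ⌊b * x⌋₊).filter
      (fun n : ℕ => Real.log (b * x) - η - η ≤ Real.log n) ⊆
      Finset.Ioc 0 ⌊b * x⌋₊ \ Finset.Ioc 0 ⌊a * x⌋₊ := by
    intro n hn
    rw [Finset.mem_filter, Finset.mem_Icc] at hn
    rw [Finset.mem_sdiff, Finset.mem_Ioc, Finset.mem_Ioc]
    refine ⟨⟨hn.1.1, hn.1.2⟩, fun h => ?_⟩
    have h1 : (n : ℝ) ≤ a * x := (Nat.le_floor_iff hax.le).1 h.2
    have h2 : Real.log n ≤ Real.log (a * x) :=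
      Real.log_le_log (by exact_mod_cast h.1) h1
    have h3 := hn.2
    rw [hη] at h3
    linarith
  have hdiff : Chebyshev.psi (b * x) - Chebyshev.psi (a * x) =
      ∑ n ∈ Finset.Ioc 0 ⌊b * x⌋₊ \ Finset.Ioc 0 ⌊a * x⌋₊, Λ n := by
    unfold Chebyshev.psi
    rw [← Finset.sum_sdiff (Finset.Ioc_subset_Ioc_right (Nat.floor_le_floor haxb) :
      Finset.Ioc 0 ⌊a * x⌋₊ ⊆ Finset.Ioc 0 ⌊b * x⌋₊)]
    ring
  rw [hdiff]
  have h4 : c ≤ ∑ n ∈ Finset.Ioc 0 ⌊b * x⌋₊ \ Finset.Ioc 0 ⌊a * x⌋₊, Λ n / (a * x) := by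
    refine hx.trans ?_
    refine le_trans (Finset.sum_le_sum_of_subset_of_nonneg hsub ?_) ?_
    · intro n _ _
      exact div_nonneg vonMangoldt_nonneg (by positivity)
    · refine Finset.sum_le_sum fun n hn => ?_
      rw [Finset.mem_sdiff, Finset.mem_Ioc, Finset.mem_Ioc] at hn
      have h5 : a * x < n := by
        rw [← Nat.floor_lt hax.le]
        by_contra h
        exact hn.2 ⟨hn.1.1, not_lt.1 h⟩
      exact div_le_div_of_nonneg_left vonMangoldt_nonneg hax h5.le
  rw [← Finset.sum_div, le_div_iff₀ hax] at h4
  linarith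

lemma theta_short (a b : ℝ) (ha : 0 < a) (hab : a < b) :
    ∃ c : ℝ, 0 < c ∧ ∀ᶠ x : ℝ in atTop,
      c * x ≤ Chebyshev.theta (b * x) - Chebyshev.theta (a * x) := by
  have hb : 0 < b := ha.trans hab
  obtain ⟨c, hc, h⟩ := psi_short a b ha hab
  obtain ⟨C, hC⟩ := Chebyshev.psi_sub_theta_le_mul_sqrt
  refine ⟨c / 2, by positivity, ?_⟩
  have hs : Tendsto (fun x : ℝ => c / 2 * √x) atTop atTop :=
    Real.tendsto_sqrt_atTop.const_mul_atTop (by positivity)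
  filter_upwards [h, hs.eventually_ge_atTop (C * √b), eventually_gt_atTop 0] with x hx h1 h0
  have h2 := hC (b * x)
  have h3 := Chebyshev.theta_le_psi (a * x)
  rw [Real.sqrt_mul hb.le] at h2
  have h4 : C * √b * √x ≤ c / 2 * √x * √x := by gcongr
  have h5 : √x * √x = x := Real.mul_self_sqrt h0.le
  have h6 : c / 2 * √x * √x = c / 2 * x := by rw [mul_assoc, h5]
  nlinarith

lemma theta_pi (a b : ℝ) (ha : 0 < a) (hab : a ≤ b) (hb : 1 ≤ b) :
    Chebyshev.theta b - Chebyshev.theta a ≤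
      ((Nat.primeCounting ⌊b⌋₊ : ℝ) - Nat.primeCounting ⌊a⌋₊) * Real.log b := by
  have hpi : ∀ n : ℕ, (Nat.primeCounting n : ℝ) =
      ∑ p ∈ (Finset.Ioc 0 n).filter Nat.Prime, (1 : ℝ) := by
    intro n
    rw [Nat.primeCounting, Nat.primeCounting', Nat.count_eq_card_filter_range]
    simp only [Finset.sum_const, nsmul_eq_mul, mul_one]
    congr 2
    ext p
    simp only [Finset.mem_filter, Finset.mem_range, Finset.mem_Ioc]
    constructor
    · rintro ⟨h1, h2⟩
      exact ⟨⟨h2.pos, by omega⟩, h2⟩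
    · rintro ⟨h1, h2⟩
      exact ⟨by omega, h2⟩
  have hsub : (Finset.Ioc 0 ⌊a⌋₊).filter Nat.Prime ⊆ (Finset.Ioc 0 ⌊b⌋₊).filter Nat.Prime :=
    Finset.filter_subset_filter _ (Finset.Ioc_subset_Ioc_right (Nat.floor_le_floor hab))
  rw [hpi, hpi, Chebyshev.theta, Chebyshev.theta, ← Finset.sum_sdiff hsub,
    ← Finset.sum_sdiff (f := fun _ => (1 : ℝ)) hsub, add_sub_cancel_right, add_sub_cancel_right,
    Finset.sum_mul]
  refine Finset.sum_le_sum fun p hp => ?_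
  rw [Finset.mem_sdiff, Finset.mem_filter, Finset.mem_Ioc] at hp
  rw [one_mul]
  refine Real.log_le_log (by exact_mod_cast hp.1.1.1) ?_
  exact (Nat.le_floor_iff (by linarith)).1 hp.1.1.2

lemma pi_short (a b : ℝ) (ha : 0 < a) (hab : a < b) :
    ∃ δ : ℝ, 0 < δ ∧ ∀ᶠ x : ℝ in atTop,
      (Nat.primeCounting ⌊a * x⌋₊ : ℝ) ≤ (1 - δ) * Nat.primeCounting ⌊b * x⌋₊ := by
  have hb : 0 < b := ha.trans hab
  obtain ⟨c, hc, h⟩ := theta_short a b ha hab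
  have hbt : Tendsto (fun x : ℝ => b * x) atTop atTop := tendsto_id.const_mul_atTop hb
  have hup := hbt.eventually (Chebyshev.eventually_primeCounting_le (ε := 1) one_pos)
  have hD : 0 < (Real.log 4 + 1) * b := by
    have := Real.log_pos (show (1 : ℝ) < 4 by norm_num)
    positivity
  refine ⟨c / ((Real.log 4 + 1) * b), by positivity, ?_⟩
  filter_upwards [h, hup, hbt.eventually_gt_atTop 1, eventually_gt_atTop 0] with x h1 h2 h3 h0
  have hlog : 0 < Real.log (b * x) := Real.log_pos h3
  have h4 := theta_pi (a * x) (b * x) (by positivity) (by gcongr) h3.le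
  rw [le_div_iff₀ hlog] at h2
  have h5 : c / ((Real.log 4 + 1) * b) * Nat.primeCounting ⌊b * x⌋₊ * Real.log (b * x) ≤ c * x := by
    calc _ = c / ((Real.log 4 + 1) * b) * (Nat.primeCounting ⌊b * x⌋₊ * Real.log (b * x)) := by ring
      _ ≤ c / ((Real.log 4 + 1) * b) * ((Real.log 4 + 1) * (b * x)) := by gcongr
      _ = c * x := by field_simp
  have h6 := (h5.trans h1).trans h4
  have h7 := le_of_mul_le_mul_right h6 hlog
  linarith

lemma ncard_pi (n : ℕ) : {p : ℕ | Nat.Prime p ∧ p ≤ n}.ncard = Nat.primeCounting n := by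
  rw [Nat.primeCounting, Nat.primeCounting', Nat.count_eq_card_filter_range,
    ← Set.ncard_coe_finset]
  congr 1
  ext p
  simp only [Finset.coe_filter, Finset.mem_range, Set.mem_setOf_eq, Nat.lt_succ_iff]
  tauto

lemma exists_U (U : Set ℕ) (γ : ℝ) (hγ : 0 < γ)
    (hU : Filter.Tendsto
      (fun n : ℕ => ({p ∈ U | p ≤ n}.ncard : ℝ) / ({p : ℕ | Nat.Prime p ∧ p ≤ n}.ncard : ℝ))
      Filter.atTop (nhds γ)) (a b : ℝ) (ha : 0 < a) (hab : a < b) :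
    ∀ᶠ x : ℝ in atTop, ∃ u ∈ U, a * x < u ∧ u ≤ b * x := by
  have hb : 0 < b := ha.trans hab
  simp_rw [ncard_pi] at hU
  obtain ⟨δ, hδ, h⟩ := pi_short a b ha hab
  set ε := γ * δ / 4 with hε
  have hε0 : 0 < ε := by positivity
  have ta : Tendsto (fun x : ℝ => ⌊a * x⌋₊) atTop atTop :=
    tendsto_nat_floor_atTop.comp (tendsto_id.const_mul_atTop ha)
  have tb : Tendsto (fun x : ℝ => ⌊b * x⌋₊) atTop atTop :=
    tendsto_nat_floor_atTop.comp (tendsto_id.const_mul_atTop hb)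
  have hlo := hU.eventually (lt_mem_nhds (show γ - ε < γ by linarith))
  have hhi := hU.eventually (gt_mem_nhds (show γ < γ + ε by linarith))
  filter_upwards [h, tb.eventually hlo, ta.eventually hhi, ta.eventually_ge_atTop 2,
    eventually_gt_atTop 0] with x h1 h2 h3 h4 h0
  have hle : ⌊a * x⌋₊ ≤ ⌊b * x⌋₊ := Nat.floor_le_floor (by gcongr)
  have hpa : 0 < Nat.primeCounting ⌊a * x⌋₊ := by
    have := Nat.monotone_primeCounting h4
    have h22 : Nat.primeCounting 2 = 1 := by decide
    omega
  have hpb : 0 < Nat.primeCounting ⌊b * x⌋₊ :=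
    lt_of_lt_of_le hpa (Nat.monotone_primeCounting hle)
  have hpa' : (0 : ℝ) < Nat.primeCounting ⌊a * x⌋₊ := by exact_mod_cast hpa
  have hpb' : (0 : ℝ) < Nat.primeCounting ⌊b * x⌋₊ := by exact_mod_cast hpb
  rw [lt_div_iff₀ hpb'] at h2
  rw [div_lt_iff₀ hpa'] at h3
  by_contra hcon
  push Not at hcon
  have hsub : {p ∈ U | p ≤ ⌊b * x⌋₊} ⊆ {p ∈ U | p ≤ ⌊a * x⌋₊} := by
    rintro p ⟨hp, hpx⟩
    refine ⟨hp, ?_⟩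
    by_contra hlt
    push Not at hlt
    have h5 := hcon p hp ((Nat.floor_lt (by positivity)).1 hlt)
    exact absurd ((Nat.le_floor_iff (by positivity)).1 hpx) (not_le.2 h5)
  have hcard : ({p ∈ U | p ≤ ⌊b * x⌋₊}.ncard : ℝ) ≤ {p ∈ U | p ≤ ⌊a * x⌋₊}.ncard := by
    exact_mod_cast Set.ncard_le_ncard hsub ((Set.finite_Iic ⌊a * x⌋₊).subset fun p hp => hp.2)
  have h6 : (γ + ε) * Nat.primeCounting ⌊a * x⌋₊ ≤
      (γ + ε) * ((1 - δ) * Nat.primeCounting ⌊b * x⌋₊) := by gcongr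
  have h7 : (γ - ε) * Nat.primeCounting ⌊b * x⌋₊ <
      (γ + ε) * (1 - δ) * Nat.primeCounting ⌊b * x⌋₊ := by linarith
  have h8 := lt_of_mul_lt_mul_right h7 hpb'.le
  nlinarith

/-- Theorem 3: if `U` is a set of primes with relative density `γ > 0`
(relative to the prime counting function) and `V ⊆ ℕ`, then
`U/V = {u/v : u ∈ U, v ∈ V}` is dense in the positive reals iff `V` is infinite. -/
theorem stmt_5 (U : Set ℕ) (hUP : ∀ p ∈ U, Nat.Prime p) (V : Set ℕ) (γ : ℝ) (hγ : 0 < γ)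
    (hU : Filter.Tendsto
      (fun n : ℕ => ({p ∈ U | p ≤ n}.ncard : ℝ) / ({p : ℕ | Nat.Prime p ∧ p ≤ n}.ncard : ℝ))
      Filter.atTop (nhds γ)) :
    (Set.Ioi (0 : ℝ) ⊆
        closure {x : ℝ | ∃ u ∈ U, ∃ v ∈ V, x = (u : ℝ) / (v : ℝ)}) ↔ V.Infinite := by
  constructor
  · intro hd hinf
    have hfin : V.Finite := hinf
    obtain ⟨N, hN⟩ := hfin.bddAbove
    set S := {x : ℝ | ∃ u ∈ U, ∃ v ∈ V, x = (u : ℝ) / (v : ℝ)} with hS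
    have hF : (Set.Ioo (0 : ℝ) 1 ∩ S).Finite := by
      refine ((Set.finite_Iic N).image2 (fun u v : ℕ => (u : ℝ) / (v : ℝ))
        (Set.finite_Iic N)).subset ?_
      rintro x ⟨⟨hx0, hx1⟩, u, hu, v, hv, rfl⟩
      have hvN : v ≤ N := hN hv
      have hv0 : (0 : ℝ) < v := by
        rcases Nat.eq_zero_or_pos v with rfl | h
        · simp at hx0
        · exact_mod_cast h
      rw [div_lt_one hv0] at hx1
      have huv : u < v := by exact_mod_cast hx1
      exact ⟨u, (huv.le.trans hvN : u ≤ N), v, hvN, rfl⟩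
    have hsub : Set.Ioo (0 : ℝ) 1 ⊆ Set.Ioo (0 : ℝ) 1 ∩ S := by
      intro x hx
      have h1 : x ∈ closure (Set.Ioo (0 : ℝ) 1 ∩ S) :=
        isOpen_Ioo.inter_closure ⟨hx, hd hx.1⟩
      rwa [hF.isClosed.closure_eq] at h1
    exact Set.Ioo_infinite (show (0 : ℝ) < 1 by norm_num) (hF.subset hsub)
  · intro hV x hx
    have hx : 0 < x := hx
    rw [Metric.mem_closure_iff]
    intro ε hε
    have h := exists_U U γ hγ hU x (x + ε / 2) hx (by linarith)
    obtain ⟨N, hN⟩ := eventually_atTop.1 h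
    obtain ⟨v, hv, hvN⟩ := hV.exists_gt ⌈N⌉₊
    have hvN' : N ≤ v := (Nat.le_ceil N).trans (by exact_mod_cast hvN.le)
    have hv0 : (0 : ℝ) < v := by exact_mod_cast lt_of_le_of_lt (Nat.zero_le _) hvN
    obtain ⟨u, hu, h1, h2⟩ := hN v hvN'
    refine ⟨u / v, ⟨u, hu, v, hv, rfl⟩, ?_⟩
    rw [← lt_div_iff₀ hv0] at h1
    rw [← div_le_iff₀ hv0] at h2
    rw [Real.dist_eq, abs_lt]
    constructor <;> linarith
end

section
/- Let U be a subset of the set of prime numbers ℙ such that the relative density δ(U) exists and equals γ > 0. Then U is fractionally dense in ℝ_{>0}, i.e. the quotient set R(U) = {p/q : p, q ∈ U} is dense in the positive reals. -/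
open Filter Topology MeasureTheory

lemma aux_G : ∃ G : ℂ → ℂ, ContinuousOn G {s | 1 ≤ s.re} ∧ ∀ s : ℂ, 1 < s.re →
    G s = LSeries (fun n => ((ArithmeticFunction.vonMangoldt n : ℝ) : ℂ)) s - 1 / (s - 1) := by
  refine ⟨ArithmeticFunction.vonMangoldt.LFunctionResidueClassAux (1 : ZMod 1),
    ArithmeticFunction.vonMangoldt.continuousOn_LFunctionResidueClassAux _, fun s hs => ?_⟩
  have h := ArithmeticFunction.vonMangoldt.eqOn_LFunctionResidueClassAux (q := 1) (a := 1)
    isUnit_one hs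
  rw [h]
  simp only [Nat.totient_one, Nat.cast_one, inv_one]
  congr 1
  refine LSeries_congr (fun {n} _ => ?_) s
  have : (n : ZMod 1) = 1 := Subsingleton.elim _ _
  simp [ArithmeticFunction.vonMangoldt.residueClass, this]

/-- Fejer kernel. -/
noncomputable def kf (l u : ℝ) : ℝ := if u = 0 then l else 2 * (1 - Real.cos (l * u)) / (l * u ^ 2)

lemma kf_nonneg {l : ℝ} (hl : 0 < l) (u : ℝ) : 0 ≤ kf l u := by
  unfold kf
  split_ifs
  · exact hl.le
  · have := Real.cos_le_one (l * u)
    have : 0 ≤ 1 - Real.cos (l * u) := by linarith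
    positivity

lemma kf_le {l : ℝ} (hl : 0 < l) (u : ℝ) : kf l u ≤ l := by
  unfold kf
  split_ifs with h
  · exact le_rfl
  · have := Real.one_sub_sq_div_two_le_cos (x := l * u)
    have h2 : 0 < l * u ^ 2 := by positivity
    rw [div_le_iff₀ h2]
    nlinarith

lemma kf_le' {l : ℝ} (hl : 0 < l) {u : ℝ} (hu : u ≠ 0) : kf l u ≤ 4 / (l * u ^ 2) := by
  unfold kf
  rw [if_neg hu]
  have := Real.neg_one_le_cos (l * u)
  gcongr
  linarith

lemma kf_ge {l : ℝ} (hl : 0 < l) {u : ℝ} (hu : |u| ≤ 1 / l) : 2 / 5 * l ≤ kf l u := by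
  unfold kf
  split_ifs with h
  · linarith
  · have hlu : |l * u| ≤ 1 := by
      rw [abs_mul, abs_of_pos hl]
      rw [le_div_iff₀ hl] at hu
      linarith
    have h2 : 0 < l * u ^ 2 := by positivity
    have := Real.cos_le_one_sub_mul_cos_sq (x := l * u) (by linarith [Real.pi_gt_three])
    rw [le_div_iff₀ h2]
    have hp : 1 / 5 ≤ 2 / Real.pi ^ 2 := by
      rw [le_div_iff₀ (by positivity)]
      nlinarith [Real.pi_lt_d2, Real.pi_gt_three]
    have : 1 / 5 * (l * u) ^ 2 ≤ 2 / Real.pi ^ 2 * (l * u) ^ 2 := by gcongr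
    nlinarith

lemma half_int {l u : ℝ} (hl : 0 < l) (hu : u ≠ 0) :
    ∫ t in (0:ℝ)..l, ((1 - t / l : ℝ) : ℂ) * Complex.exp (Complex.I * t * u) =
      (Complex.exp (Complex.I * l * u) - 1) / (l * (Complex.I * u) ^ 2) - 1 / (Complex.I * u) := by
  have hlc : (l : ℂ) ≠ 0 := by exact_mod_cast hl.ne'
  have huc : (u : ℂ) ≠ 0 := by exact_mod_cast hu
  have hd : ∀ t : ℝ, HasDerivAt (fun t : ℝ => ((1 - t / l : ℝ) : ℂ) * Complex.exp (Complex.I * t * u)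
      / (Complex.I * u) + Complex.exp (Complex.I * t * u) / (l * (Complex.I * u) ^ 2))
      (((1 - t / l : ℝ) : ℂ) * Complex.exp (Complex.I * t * u)) t := by
    intro t
    have h1 : HasDerivAt (fun t : ℝ => (t : ℂ)) 1 t := Complex.ofRealCLM.hasDerivAt
    have h2 : HasDerivAt (fun t : ℝ => Complex.exp (Complex.I * t * u))
        (Complex.exp (Complex.I * t * u) * (Complex.I * u)) t := by
      have := ((h1.const_mul Complex.I).mul_const (u : ℂ)).cexp
      simpa using this
    have h3 : HasDerivAt (fun t : ℝ => ((1 - t / l : ℝ) : ℂ)) (-(1 / l)) t := by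
      have := (h1.div_const (l : ℂ)).const_sub 1
      simpa using this
    have h4 := ((h3.mul h2).div_const (Complex.I * u)).add (h2.div_const (l * (Complex.I * u) ^ 2))
    convert! h4 using 1
    have := Complex.I_ne_zero
    field_simp
    ring
  rw [intervalIntegral.integral_eq_sub_of_hasDerivAt (fun t _ => hd t)
    (Continuous.intervalIntegrable (by fun_prop) _ _)]
  have := Complex.I_ne_zero
  simp only [div_self hl.ne', sub_self, Complex.ofReal_zero, zero_mul, zero_div, zero_add, mul_zero,
    Complex.exp_zero, sub_zero, Complex.ofReal_one, mul_one]
  field_simp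
  ring

lemma kf_int {l : ℝ} (hl : 0 < l) (u : ℝ) :
    ∫ t in (-l)..l, ((1 - |t| / l : ℝ) : ℂ) * Complex.exp (Complex.I * t * u) = (kf l u : ℂ) := by
  have hlc : (l : ℂ) ≠ 0 := by exact_mod_cast hl.ne'
  have hA : ∫ t in (0:ℝ)..l, ((1 - |t| / l : ℝ) : ℂ) * Complex.exp (Complex.I * t * u) =
      ∫ t in (0:ℝ)..l, ((1 - t / l : ℝ) : ℂ) * Complex.exp (Complex.I * t * u) := by
    apply intervalIntegral.integral_congr
    intro t ht
    rw [Set.uIcc_of_le hl.le] at ht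
    simp only [abs_of_nonneg ht.1]
  have hB : ∫ t in (-l)..0, ((1 - |t| / l : ℝ) : ℂ) * Complex.exp (Complex.I * t * u) =
      ∫ t in (0:ℝ)..l, ((1 - t / l : ℝ) : ℂ) * Complex.exp (Complex.I * t * (-u : ℝ)) := by
    have := intervalIntegral.integral_comp_neg (a := 0) (b := l)
      (fun t : ℝ => ((1 - |t| / l : ℝ) : ℂ) * Complex.exp (Complex.I * t * u))
    rw [neg_zero] at this
    rw [← this]
    apply intervalIntegral.integral_congr
    intro t ht
    rw [Set.uIcc_of_le hl.le] at ht
    simp only [abs_neg, abs_of_nonneg ht.1]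
    push_cast
    ring_nf
  have hc : Continuous (fun t : ℝ => ((1 - |t| / l : ℝ) : ℂ) * Complex.exp (Complex.I * t * u)) := by
    fun_prop
  rw [← intervalIntegral.integral_add_adjacent_intervals (b := 0) (hc.intervalIntegrable _ _)
    (hc.intervalIntegrable _ _), hA, hB]
  by_cases hu : u = 0
  · subst hu
    simp only [neg_zero, Complex.ofReal_zero, mul_zero, Complex.exp_zero, mul_one,
      intervalIntegral.integral_ofReal]
    rw [← Complex.ofReal_add]
    congr 1
    rw [intervalIntegral.integral_sub (by simp)
      (Continuous.intervalIntegrable (by fun_prop) _ _), intervalIntegral.integral_div]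
    simp [kf]
    field_simp
    ring
  · rw [half_int hl hu, half_int hl (neg_ne_zero.mpr hu)]
    have huc : (u : ℂ) ≠ 0 := by exact_mod_cast hu
    unfold kf
    rw [if_neg hu]
    push_cast
    rw [Complex.cos]
    rw [show Complex.I * l * -u = - (l * u) * Complex.I by ring,
      show Complex.I * l * u = (l * u) * Complex.I by ring]
    have := Complex.I_ne_zero
    have h2 := Complex.I_sq
    field_simp
    rw [h2]
    ring


/-- Damped von Mangoldt weights. -/
noncomputable def aw (δ : ℝ) (n : ℕ) : ℝ :=
  ArithmeticFunction.vonMangoldt n * Real.exp (-(1 + δ) * Real.log n)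

lemma aw_nonneg (δ : ℝ) (n : ℕ) : 0 ≤ aw δ n :=
  mul_nonneg ArithmeticFunction.vonMangoldt_nonneg (Real.exp_pos _).le

lemma term_eq (δ t : ℝ) (n : ℕ) :
    LSeries.term (fun n => ((ArithmeticFunction.vonMangoldt n : ℝ) : ℂ)) (1 + δ + Complex.I * t) n
      = aw δ n * Complex.exp (-(Complex.I * t * Real.log n)) := by
  rcases eq_or_ne n 0 with rfl | hn
  · simp [aw]
  · rw [LSeries.term_of_ne_zero hn, Complex.cpow_def_of_ne_zero (by exact_mod_cast hn), aw,
      ← Complex.natCast_log, div_eq_mul_inv, ← Complex.exp_neg]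
    push_cast
    rw [mul_assoc, ← Complex.exp_add]
    congr 2
    ring

lemma aw_summable {δ : ℝ} (hδ : 0 < δ) : Summable (aw δ) := by
  have h := ArithmeticFunction.LSeriesSummable_vonMangoldt (s := 1 + δ + Complex.I * (0 : ℝ))
    (by simp [hδ])
  unfold LSeriesSummable at h
  have h2 := h.norm
  refine h2.congr fun n => ?_
  rw [term_eq]
  simp [abs_of_nonneg (aw_nonneg δ n)]

lemma hasSum_part {l δ : ℝ} (hl : 0 < l) (hδ : 0 < δ) (T : ℝ) :
    HasSum (fun n => ((aw δ n * kf l (T - Real.log n) : ℝ) : ℂ))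
      (∫ t in (-l)..l, ((1 - |t| / l : ℝ) : ℂ) * Complex.exp (Complex.I * t * T) *
        LSeries (fun n => ((ArithmeticFunction.vonMangoldt n : ℝ) : ℂ)) (1 + δ + Complex.I * t)) := by
  have key := intervalIntegral.hasSum_integral_of_dominated_convergence
    (μ := volume) (a := -l) (b := l)
    (F := fun (n : ℕ) (t : ℝ) => ((1 - |t| / l : ℝ) : ℂ) * Complex.exp (Complex.I * t * T) *
      (aw δ n * Complex.exp (-(Complex.I * t * Real.log n))))
    (f := fun t : ℝ => ((1 - |t| / l : ℝ) : ℂ) * Complex.exp (Complex.I * t * T) *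
        LSeries (fun n => ((ArithmeticFunction.vonMangoldt n : ℝ) : ℂ)) (1 + δ + Complex.I * t))
    (fun n _ => aw δ n) ?_ ?_ ?_ ?_ ?_
  · convert! key using 2 with n
    rw [Complex.ofReal_mul, ← kf_int hl, ← intervalIntegral.integral_const_mul]
    congr 1
    ext t
    have : Complex.exp (Complex.I * t * (T - Real.log n : ℝ)) = Complex.exp (Complex.I * t * T) *
        Complex.exp (-(Complex.I * t * (Real.log n : ℝ))) := by
      rw [← Complex.exp_add]
      congr 1
      rw [Complex.ofReal_sub]
      ring
    rw [this]
    ring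
  · intro n
    apply Continuous.aestronglyMeasurable
    fun_prop
  · intro n
    refine Eventually.of_forall fun t ht => ?_
    rw [Set.uIoc_of_le (by linarith)] at ht
    have h1 : |t| / l ≤ 1 := by
      rw [div_le_one hl]
      exact abs_le.mpr ⟨ht.1.le, ht.2⟩
    have h2 : 0 ≤ |t| / l := by positivity
    have e1 : ‖Complex.exp (Complex.I * t * T)‖ = 1 := by
      simp [Complex.norm_exp]
    have e2 : ‖Complex.exp (-(Complex.I * t * Real.log n))‖ = 1 := by
      rw [Complex.norm_exp, Complex.neg_re, Complex.re_mul_ofReal]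
      simp
    rw [norm_mul, norm_mul, norm_mul, e1, e2, Complex.norm_real, Complex.norm_real,
      Real.norm_of_nonneg (aw_nonneg δ n), Real.norm_of_nonneg (by linarith)]
    have := aw_nonneg δ n
    nlinarith
  · exact Eventually.of_forall fun t _ => aw_summable hδ
  · exact intervalIntegrable_const
  · refine Eventually.of_forall fun t _ => ?_
    apply HasSum.mul_left
    have h := ArithmeticFunction.LSeriesSummable_vonMangoldt (s := 1 + δ + Complex.I * t)
      (by simp [hδ])
    have := h.hasSum
    refine this.congr_fun ?_ |> id
    exact fun n => (term_eq δ t n).symm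

lemma prod_integrable {l δ : ℝ} (hl : 0 < l) (hδ : 0 < δ) (T : ℝ) :
    Integrable (Function.uncurry fun (t u : ℝ) => ((1 - |t| / l : ℝ) : ℂ) *
      Complex.exp (Complex.I * t * T) * Complex.exp (-(δ + Complex.I * t) * u))
      ((volume.restrict (Set.uIoc (-l) l)).prod (volume.restrict (Set.Ioi 0))) := by
  have hb : Integrable (fun p : ℝ × ℝ => (1:ℝ) * Real.exp (-δ * p.2))
      ((volume.restrict (Set.uIoc (-l) l)).prod (volume.restrict (Set.Ioi 0))) := by
    refine Integrable.mul_prod (f := fun _ : ℝ => (1 : ℝ)) (g := fun u : ℝ => Real.exp (-δ * u)) ?_ ?_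
    · rw [Set.uIoc_of_le (by linarith)]
      exact integrable_const _
    · exact exp_neg_integrableOn_Ioi 0 hδ
  refine hb.mono' ?_ ?_
  · apply Continuous.aestronglyMeasurable
    unfold Function.uncurry
    fun_prop
  · rw [Measure.prod_restrict]
    rw [ae_restrict_iff' (measurableSet_uIoc.prod measurableSet_Ioi)]
    refine Eventually.of_forall fun ⟨t, u⟩ ⟨ht, hu⟩ => ?_
    simp only at ht hu
    rw [Set.uIoc_of_le (by linarith)] at ht
    have h1 : |t| / l ≤ 1 := by
      rw [div_le_one hl]
      exact abs_le.mpr ⟨ht.1.le, ht.2⟩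
    have h2 : 0 ≤ |t| / l := by positivity
    have e1 : ‖Complex.exp (Complex.I * t * T)‖ = 1 := by
      simp [Complex.norm_exp]
    have e2 : ‖Complex.exp (-(δ + Complex.I * t) * u)‖ = Real.exp (-δ * u) := by
      rw [Complex.norm_exp]
      simp
    simp only [Function.uncurry]
    rw [norm_mul, norm_mul, e1, e2, Complex.norm_real, Real.norm_of_nonneg (by linarith)]
    have := Real.exp_pos (-δ * u)
    nlinarith

lemma inner_eq {l : ℝ} (hl : 0 < l) (δ T u : ℝ) :
    ∫ t in (-l)..l, ((1 - |t| / l : ℝ) : ℂ) *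
      Complex.exp (Complex.I * t * T) * Complex.exp (-(δ + Complex.I * t) * u) =
    ((Real.exp (-δ * u) * kf l (T - u) : ℝ) : ℂ) := by
  push_cast
  rw [← kf_int hl, ← intervalIntegral.integral_const_mul]
  congr 1
  ext t
  have : Complex.exp (-δ * u) * Complex.exp (Complex.I * t * (T - u : ℝ)) =
      Complex.exp (Complex.I * t * T) * Complex.exp (-(δ + Complex.I * t) * u) := by
    rw [← Complex.exp_add, ← Complex.exp_add]
    congr 1
    push_cast
    ring
  rw [mul_assoc, ← this]
  push_cast
  ring

lemma kf_integrable {l δ : ℝ} (hl : 0 < l) (hδ : 0 < δ) (T : ℝ) :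
    IntegrableOn (fun u : ℝ => Real.exp (-δ * u) * kf l (T - u)) (Set.Ioi 0) := by
  have h := (prod_integrable hl hδ T).integral_prod_right
  have h2 : Integrable (fun u : ℝ => ((Real.exp (-δ * u) * kf l (T - u) : ℝ) : ℂ))
      (volume.restrict (Set.Ioi 0)) := by
    refine h.congr (Eventually.of_forall fun u => ?_)
    simp only
    rw [← inner_eq hl, intervalIntegral.integral_of_le (by linarith), Set.uIoc_of_le (by linarith)]
    rfl
  exact_mod_cast h2.re

lemma int_part {l δ : ℝ} (hl : 0 < l) (hδ : 0 < δ) (T : ℝ) :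
    ∫ t in (-l)..l, ((1 - |t| / l : ℝ) : ℂ) * Complex.exp (Complex.I * t * T) *
        (1 / ((1 + δ + Complex.I * t : ℂ) - 1)) =
    ((∫ u in Set.Ioi (0:ℝ), Real.exp (-δ * u) * kf l (T - u) : ℝ) : ℂ) := by
  rw [← integral_complex_ofReal]
  have h := intervalIntegral_integral_swap (prod_integrable hl hδ T)
  have : ∀ u : ℝ, ((Real.exp (-δ * u) * kf l (T - u) : ℝ) : ℂ) = _ := fun u => (inner_eq hl δ T u).symm
  refine Eq.trans ?_ (h.trans ?_)
  · congr 1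
    ext t
    rw [integral_const_mul]
    congr 1
    rw [integral_exp_mul_complex_Ioi (by simp [hδ])]
    simp
    have : (1 + (δ:ℂ) + Complex.I * t - 1) = δ + Complex.I * t := by ring
    rw [this, ← neg_add_rev, neg_div, ← div_neg]
    simp [add_comm]
  · congr 1
    ext u
    exact inner_eq hl δ T u


lemma gline_cont {G : ℂ → ℂ} (hG : ContinuousOn G {s | 1 ≤ s.re}) (l T : ℝ) :
    ContinuousOn (fun p : ℝ × ℝ => ((1 - |p.2| / l : ℝ) : ℂ) * Complex.exp (Complex.I * p.2 * T) *
        G (1 + p.1 + Complex.I * p.2)) {p | 0 ≤ p.1} := by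
  apply ContinuousOn.mul
  · fun_prop
  · apply hG.comp
    · fun_prop
    · intro p hp
      simpa using hp

lemma limit_zero {G : ℂ → ℂ} (hG : ContinuousOn G {s | 1 ≤ s.re}) {l : ℝ} (hl : 0 < l) (T : ℝ) :
    Tendsto (fun δ : ℝ => ∫ t in (-l)..l, ((1 - |t| / l : ℝ) : ℂ) * Complex.exp (Complex.I * t * T) *
        G (1 + δ + Complex.I * t)) (𝓝[>] 0)
      (𝓝 (∫ t in (-l)..l, ((1 - |t| / l : ℝ) : ℂ) * Complex.exp (Complex.I * t * T) *
        G (1 + (0:ℝ) + Complex.I * t))) := by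
  have hc := gline_cont hG l T
  obtain ⟨C, hC⟩ := ((isCompact_Icc (a := (0:ℝ)) (b := 1)).prod
    (isCompact_Icc (a := -l) (b := l))).exists_bound_of_continuousOn
    (hc.mono (fun p hp => hp.1.1))
  apply intervalIntegral.tendsto_integral_filter_of_dominated_convergence (fun _ => C)
  · filter_upwards [self_mem_nhdsWithin] with δ hδ
    apply Continuous.aestronglyMeasurable
    have : ContinuousOn (fun t : ℝ => (fun p : ℝ × ℝ => ((1 - |p.2| / l : ℝ) : ℂ) *
      Complex.exp (Complex.I * p.2 * T) * G (1 + p.1 + Complex.I * p.2)) (δ, t)) Set.univ :=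
      hc.comp (by fun_prop) (fun t _ => (le_of_lt hδ : (0:ℝ) ≤ δ))
    exact continuousOn_univ.mp this
  · filter_upwards [Ioc_mem_nhdsGT (zero_lt_one (α := ℝ))] with δ hδ
    refine Eventually.of_forall fun t ht => ?_
    rw [Set.uIoc_of_le (by linarith)] at ht
    exact hC (δ, t) ⟨⟨hδ.1.le, hδ.2⟩, ⟨ht.1.le, ht.2⟩⟩
  · exact intervalIntegrable_const
  · refine Eventually.of_forall fun t ht => ?_
    have hm : ((0:ℝ), t) ∈ {p : ℝ × ℝ | 0 ≤ p.1} := by simp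
    have h1 := (hc (0, t) hm).tendsto
    have h2 : Tendsto (fun δ : ℝ => (δ, t)) (𝓝[>] 0) (𝓝[{p : ℝ × ℝ | 0 ≤ p.1}] (0, t)) := by
      apply tendsto_nhdsWithin_of_tendsto_nhds_of_eventually_within
      · have : Continuous (fun δ : ℝ => (δ, t)) := by fun_prop
        exact (this.tendsto 0).mono_left nhdsWithin_le_nhds
      · filter_upwards [self_mem_nhdsWithin] with δ hδ
        have h0 : (0:ℝ) < δ := hδ
        exact h0.le
    have h3 := Tendsto.comp h1 h2
    simpa only [Function.comp_def] using h3

lemma rl {G : ℂ → ℂ} {l : ℝ} (hl : 0 < l) :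
    Tendsto (fun T : ℝ => ∫ t in (-l)..l, ((1 - |t| / l : ℝ) : ℂ) * Complex.exp (Complex.I * t * T) *
        G (1 + (0:ℝ) + Complex.I * t)) atTop (𝓝 0) := by
  have h := Real.tendsto_integral_exp_smul_cocompact (Set.indicator (Set.Ioc (-l) l)
    (fun t : ℝ => ((1 - |t| / l : ℝ) : ℂ) * G (1 + (0:ℝ) + Complex.I * t)))
  have h2 : Tendsto (fun T : ℝ => -(T / (2 * Real.pi))) atTop (cocompact ℝ) := by
    have : Tendsto (fun T : ℝ => -(T / (2 * Real.pi))) atTop atBot :=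
      tendsto_neg_atTop_atBot.comp (tendsto_id.atTop_div_const (by positivity))
    exact this.mono_right atBot_le_cocompact
  refine (h.comp h2).congr fun T => ?_
  simp only [Function.comp]
  rw [intervalIntegral.integral_of_le (by linarith), ← integral_indicator measurableSet_Ioc]
  congr 1
  ext t
  by_cases ht : t ∈ Set.Ioc (-l) l
  · simp only [Set.indicator_of_mem ht]
    rw [Circle.smul_def, Real.fourierChar_apply, smul_eq_mul]
    have : ((2 * Real.pi * -(t * -(T / (2 * Real.pi))) : ℝ) : ℂ) * Complex.I = Complex.I * t * T := by
      have : (2 * Real.pi * -(t * -(T / (2 * Real.pi))) : ℝ) = t * T := by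
        have := Real.pi_ne_zero
        field_simp
      rw [this]
      push_cast
      ring
    rw [this]
    ring
  · simp only [Set.indicator_of_notMem ht, smul_zero]

lemma ident {G : ℂ → ℂ} (hG : ContinuousOn G {s | 1 ≤ s.re}) (hG' : ∀ s : ℂ, 1 < s.re →
    G s = LSeries (fun n => ((ArithmeticFunction.vonMangoldt n : ℝ) : ℂ)) s - 1 / (s - 1))
    {l δ : ℝ} (hl : 0 < l) (hδ : 0 < δ) (T : ℝ) :
    HasSum (fun n : ℕ => aw δ n * kf l (T - Real.log n))
      ((∫ t in (-l)..l, ((1 - |t| / l : ℝ) : ℂ) * Complex.exp (Complex.I * t * T) *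
        G (1 + δ + Complex.I * t)).re + ∫ u in Set.Ioi (0:ℝ), Real.exp (-δ * u) * kf l (T - u)) := by
  have h1 := Complex.hasSum_re (hasSum_part hl hδ T)
  simp only [Complex.ofReal_re] at h1
  convert h1 using 1
  have h2 := int_part hl hδ T
  have hc : Continuous (fun t : ℝ => ((1 - |t| / l : ℝ) : ℂ) * Complex.exp (Complex.I * t * T) *
        G (1 + δ + Complex.I * t)) := by
    have : ContinuousOn (fun t : ℝ => (fun p : ℝ × ℝ => ((1 - |p.2| / l : ℝ) : ℂ) *
      Complex.exp (Complex.I * p.2 * T) * G (1 + p.1 + Complex.I * p.2)) (δ, t)) Set.univ :=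
      (gline_cont hG l T).comp (by fun_prop) (fun t _ => hδ.le)
    exact continuousOn_univ.mp this
  have hc2 : Continuous (fun t : ℝ => ((1 - |t| / l : ℝ) : ℂ) * Complex.exp (Complex.I * t * T) *
        (1 / ((1 + δ + Complex.I * t : ℂ) - 1))) := by
    apply Continuous.mul
    · fun_prop
    · apply Continuous.div (by fun_prop) (by fun_prop)
      intro t h
      have := congrArg Complex.re h
      simp at this
      exact hδ.ne' this
  have h3 : ∫ t in (-l)..l, ((1 - |t| / l : ℝ) : ℂ) * Complex.exp (Complex.I * t * T) *
        LSeries (fun n => ((ArithmeticFunction.vonMangoldt n : ℝ) : ℂ)) (1 + δ + Complex.I * t) =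
      (∫ t in (-l)..l, ((1 - |t| / l : ℝ) : ℂ) * Complex.exp (Complex.I * t * T) *
        G (1 + δ + Complex.I * t)) +
      ∫ t in (-l)..l, ((1 - |t| / l : ℝ) : ℂ) * Complex.exp (Complex.I * t * T) *
        (1 / ((1 + δ + Complex.I * t : ℂ) - 1)) := by
    rw [← intervalIntegral.integral_add (hc.intervalIntegrable _ _) (hc2.intervalIntegrable _ _)]
    congr 1
    ext t
    rw [hG' _ (by simp [hδ])]
    ring
  rw [h3, h2, Complex.add_re, Complex.ofReal_re]

lemma int_lower {l δ T : ℝ} (hl : 0 < l) (hδ : 0 < δ) (hT : 1 / l < T)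
    (h : δ * (T + 1 / l) ≤ 1) :
    1 / 4 ≤ ∫ u in Set.Ioi (0:ℝ), Real.exp (-δ * u) * kf l (T - u) := by
  have hsub : Set.Icc (T - 1 / l) (T + 1 / l) ⊆ Set.Ioi 0 := fun u hu => by
    have := hu.1
    simp only [Set.mem_Ioi]
    linarith
  have h1 := setIntegral_mono_set (kf_integrable hl hδ T)
    (Eventually.of_forall fun u => mul_nonneg (Real.exp_pos _).le (kf_nonneg hl _))
    (LE.le.eventuallyLE hsub)
  refine le_trans ?_ h1
  have h2 : ∫ u in Set.Icc (T - 1 / l) (T + 1 / l), (Real.exp (-1) * (2 / 5 * l)) ≤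
      ∫ u in Set.Icc (T - 1 / l) (T + 1 / l), Real.exp (-δ * u) * kf l (T - u) := by
    apply setIntegral_mono_on
    · exact integrableOn_const (by simp)
    · exact (kf_integrable hl hδ T).mono_set hsub
    · exact measurableSet_Icc
    · intro u hu
      have h3 : 2 / 5 * l ≤ kf l (T - u) := kf_ge hl (abs_le.mpr ⟨by linarith [hu.2], by linarith [hu.1]⟩)
      have h4 : -1 ≤ -δ * u := by
        have : δ * u ≤ δ * (T + 1 / l) := by gcongr; exact hu.2
        linarith
      gcongr
  refine le_trans ?_ h2
  have hl1 : 0 < 1 / l := by positivity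
  simp only [integral_const, smul_eq_mul, measureReal_restrict_apply_univ, Real.volume_real_Icc]
  rw [max_eq_left (by linarith)]
  have : (T + 1 / l - (T - 1 / l)) * (Real.exp (-1) * (2 / 5 * l)) = 4 / 5 * Real.exp (-1) := by
    field_simp
    ring
  rw [this]
  have := Real.exp_neg_one_gt_d9
  linarith

lemma sum_lower {l : ℝ} (hl : 0 < l) : ∀ᶠ T in atTop, ∃ δ : ℝ, 0 < δ ∧
    1 / 8 ≤ ∑' n : ℕ, aw δ n * kf l (T - Real.log n) ∧
    Summable (fun n : ℕ => aw δ n * kf l (T - Real.log n)) := by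
  obtain ⟨G, hG, hG'⟩ := aux_G
  have h1 := (rl (G := G) hl).norm
  rw [norm_zero] at h1
  filter_upwards [h1.eventually (gt_mem_nhds (show (0:ℝ) < 1 / 16 by norm_num)),
    eventually_gt_atTop (1 / l)] with T hT hTl
  have h2 := (limit_zero hG hl T).norm.eventually (gt_mem_nhds hT)
  have hl1 : 0 < 1 / l := by positivity
  have hpos : 0 < T + 1 / l := by linarith
  have h3 : ∀ᶠ δ : ℝ in 𝓝[>] 0, 0 < δ ∧ δ ≤ 1 / (T + 1 / l) := Ioc_mem_nhdsGT (by positivity)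
  obtain ⟨δ, hδ1, hδ, hδ2⟩ := (h2.and h3).exists
  have h4 := ident hG hG' hl hδ T
  have h5 := int_lower hl hδ hTl (by rwa [le_div_iff₀ hpos] at hδ2)
  refine ⟨δ, hδ, ?_, h4.summable⟩
  rw [h4.tsum_eq]
  have h6 := (abs_le.mp ((Complex.abs_re_le_norm _).trans hδ1.le)).1
  linarith


/-- undamped weight -/
noncomputable def bw (n : ℕ) : ℝ := ArithmeticFunction.vonMangoldt n / n

lemma bw_nonneg (n : ℕ) : 0 ≤ bw n :=
  div_nonneg ArithmeticFunction.vonMangoldt_nonneg (Nat.cast_nonneg n)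

lemma aw_le {δ : ℝ} (hδ : 0 < δ) (n : ℕ) : aw δ n ≤ bw n := by
  rcases eq_or_ne n 0 with rfl | hn
  · simp [aw, bw]
  · unfold aw bw
    rw [div_eq_mul_inv]
    have hn' : (0:ℝ) < n := by positivity
    have h1 : (1:ℝ) ≤ n := by exact_mod_cast Nat.one_le_iff_ne_zero.mpr hn
    have : Real.exp (-(1 + δ) * Real.log n) ≤ (n:ℝ)⁻¹ := by
      rw [← Real.exp_log (inv_pos.mpr hn'), Real.log_inv]
      gcongr
      nlinarith [Real.log_nonneg h1]
    have h0 : 0 ≤ ArithmeticFunction.vonMangoldt n := ArithmeticFunction.vonMangoldt_nonneg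
    gcongr

lemma block (s : Finset ℕ) (j : ℤ) : ∑ n ∈ s.filter (fun n : ℕ => ⌊Real.log n⌋ = j), bw n ≤ (Real.log 4 + 4) * Real.exp 1 := by
  have h1 : ∑ n ∈ s.filter (fun n : ℕ => ⌊Real.log n⌋ = j), bw n ≤
      ∑ n ∈ s.filter (fun n : ℕ => ⌊Real.log n⌋ = j), Real.exp (-j) * ArithmeticFunction.vonMangoldt n := by
    apply Finset.sum_le_sum
    intro n hn
    rw [Finset.mem_filter, Int.floor_eq_iff] at hn
    rcases eq_or_ne n 0 with rfl | hn0
    · simp [bw]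
    have hn' : (0:ℝ) < n := by positivity
    unfold bw
    rw [div_eq_mul_inv, mul_comm]
    have h0 : 0 ≤ ArithmeticFunction.vonMangoldt n := ArithmeticFunction.vonMangoldt_nonneg
    gcongr
    rw [← Real.exp_log (inv_pos.mpr hn'), Real.log_inv]
    gcongr
    exact hn.2.1
  refine h1.trans ?_
  rw [← Finset.mul_sum]
  have h2 : ∑ n ∈ s.filter (fun n : ℕ => ⌊Real.log n⌋ = j), ArithmeticFunction.vonMangoldt n ≤
      Chebyshev.psi (Real.exp (j + 1)) := by
    rw [Chebyshev.psi_eq_sum_Icc]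
    apply Finset.sum_le_sum_of_subset_of_nonneg
    · intro n hn
      rw [Finset.mem_filter, Int.floor_eq_iff] at hn
      rw [Finset.mem_Icc]
      refine ⟨Nat.zero_le _, ?_⟩
      rcases eq_or_ne n 0 with rfl | hn0
      · simp
      apply Nat.le_floor
      rw [← Real.log_le_iff_le_exp (by positivity)]
      exact hn.2.2.le
    · intros
      exact ArithmeticFunction.vonMangoldt_nonneg
  have h3 := Chebyshev.psi_le_const_mul_self (Real.exp_pos (j + 1)).le
  calc _ ≤ Real.exp (-j) * ((Real.log 4 + 4) * Real.exp (j + 1)) := by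
        gcongr
        exact h2.trans h3
    _ = (Real.log 4 + 4) * Real.exp 1 := by
      rw [mul_left_comm, ← Real.exp_add]
      congr 2
      ring

lemma tail : ∃ C : ℝ, 0 < C ∧ ∀ (T : ℝ) (s : Finset ℕ),
    ∑ n ∈ s, bw n * (1 / (1 + (T - Real.log n) ^ 2)) ≤ C := by
  have hsum : Summable (fun j : ℤ => 4 / (1 + (j : ℝ) ^ 2)) := by
    have h := (Real.summable_one_div_int_pow (p := 2)).mpr (by norm_num)
    have h2 : Summable (fun j : ℤ => 4 * (1 / (j : ℝ) ^ 2)) := h.mul_left 4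
    refine h2.of_norm_bounded_eventually ?_
    have : ∀ᶠ j : ℤ in cofinite, j ≠ 0 := by
      rw [eventually_cofinite]
      simp
    filter_upwards [this] with j hj
    have : (j:ℝ) ≠ 0 := by exact_mod_cast hj
    rw [Real.norm_of_nonneg (by positivity), mul_one_div]
    gcongr
    linarith
  set B := (Real.log 4 + 4) * Real.exp 1 with hB
  have hBpos : 0 < B := by
    have := Real.log_pos (show (1:ℝ) < 4 by norm_num)
    positivity
  set S := ∑' j : ℤ, 4 / (1 + (j : ℝ) ^ 2) with hS
  have hSnn : 0 ≤ S := tsum_nonneg fun j => by positivity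
  refine ⟨B * S + 1, by positivity, fun T s => ?_⟩
  have h1 : ∑ n ∈ s, bw n * (1 / (1 + (T - Real.log n) ^ 2)) ≤
      ∑ n ∈ s, bw n * (4 / (1 + ((⌊Real.log n⌋ - ⌊T⌋ : ℤ) : ℝ) ^ 2)) := by
    apply Finset.sum_le_sum
    intro n _
    apply mul_le_mul_of_nonneg_left _ (bw_nonneg n)
    rw [div_le_div_iff₀ (by positivity) (by positivity)]
    push_cast
    have a1 := Int.floor_le T
    have a2 := Int.lt_floor_add_one T
    have a3 := Int.floor_le (Real.log n)
    have a4 := Int.lt_floor_add_one (Real.log n)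
    set x := ((⌊Real.log n⌋ : ℤ) : ℝ) - ⌊T⌋ with hx
    set y := T - Real.log n with hy
    have b1 : x + y < 1 := by linarith
    have b2 : -1 < x + y := by linarith
    nlinarith [sq_nonneg (x + 2 * y), mul_pos (sub_pos.mpr b1) (sub_pos.mpr b2)]
  refine h1.trans ?_
  have h2 := Finset.sum_fiberwise_of_maps_to (s := s) (t := s.image fun n : ℕ => ⌊Real.log n⌋)
    (g := fun n : ℕ => ⌊Real.log n⌋) (fun n hn => Finset.mem_image_of_mem _ hn)
    (fun n => bw n * (4 / (1 + ((⌊Real.log n⌋ - ⌊T⌋ : ℤ) : ℝ) ^ 2)))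
  rw [← h2]
  have h3 : ∀ j ∈ s.image fun n : ℕ => ⌊Real.log n⌋, ∑ n ∈ s.filter (fun n : ℕ => ⌊Real.log n⌋ = j),
      bw n * (4 / (1 + ((⌊Real.log n⌋ - ⌊T⌋ : ℤ) : ℝ) ^ 2)) ≤
      B * (4 / (1 + ((j - ⌊T⌋ : ℤ) : ℝ) ^ 2)) := by
    intro j _
    have : ∑ n ∈ s.filter (fun n : ℕ => ⌊Real.log n⌋ = j), bw n * (4 / (1 + ((⌊Real.log n⌋ - ⌊T⌋ : ℤ) : ℝ) ^ 2)) =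
        ∑ n ∈ s.filter (fun n : ℕ => ⌊Real.log n⌋ = j), bw n * (4 / (1 + ((j - ⌊T⌋ : ℤ) : ℝ) ^ 2)) := by
      apply Finset.sum_congr rfl
      intro n hn
      rw [(Finset.mem_filter.mp hn).2]
    rw [this, ← Finset.sum_mul]
    gcongr
    exact block s j
  refine (Finset.sum_le_sum h3).trans ?_
  rw [← Finset.mul_sum]
  have h4 : Summable (fun j : ℤ => 4 / (1 + ((j - ⌊T⌋ : ℤ) : ℝ) ^ 2)) :=
    hsum.comp_injective (Equiv.subRight ⌊T⌋).injective
  have h5 := h4.sum_le_tsum (s.image fun n : ℕ => ⌊Real.log n⌋) (fun j _ => by positivity)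
  have h6 : ∑' j : ℤ, 4 / (1 + ((j - ⌊T⌋ : ℤ) : ℝ) ^ 2) = S :=
    (Equiv.subRight ⌊T⌋).tsum_eq (fun j : ℤ => 4 / (1 + (j : ℝ) ^ 2))
  rw [h6] at h5
  nlinarith

lemma psi_window {ε : ℝ} (hε : 0 < ε) : ∃ c : ℝ, 0 < c ∧ ∀ᶠ T in atTop,
    c * Real.exp (T - 2 * ε) ≤ Chebyshev.psi (Real.exp (T + ε)) - Chebyshev.psi (Real.exp (T - 2 * ε)) := by
  obtain ⟨C, hC, htail⟩ := tail
  set D := 4 * (1 + 1 / ε ^ 2) * C with hD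
  have hDpos : 0 < D := by positivity
  set l := 16 * D with hl
  have hlpos : 0 < l := by positivity
  refine ⟨1 / (16 * l), by positivity, ?_⟩
  filter_upwards [sum_lower hlpos] with T ⟨δ, hδ, hs, hsm⟩
  set x := Real.exp (T - 2 * ε) with hx
  set y := Real.exp (T + ε) with hy
  have hxy : x ≤ y := by
    rw [hx, hy]
    gcongr
    linarith
  set P := Chebyshev.psi y - Chebyshev.psi x with hP
  have hP' : P = ∑ n ∈ Finset.Ioc ⌊x⌋₊ ⌊y⌋₊, ArithmeticFunction.vonMangoldt n := by
    rw [hP, Chebyshev.psi, Chebyshev.psi, sub_eq_iff_eq_add, add_comm]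
    exact (Finset.sum_Ioc_consecutive _ (Nat.zero_le _) (Nat.floor_le_floor hxy)).symm
  have hxpos : 0 < x := Real.exp_pos _
  have main : ∑' n : ℕ, aw δ n * kf l (T - Real.log n) ≤ l * (P / x) + 1 / 16 := by
    refine hsm.tsum_le_of_sum_le fun s => ?_
    have hterm : ∀ n ∈ s, aw δ n * kf l (T - Real.log n) ≤
        l * (if n ∈ Finset.Ioc ⌊x⌋₊ ⌊y⌋₊ then ArithmeticFunction.vonMangoldt n / x else 0) +
        4 / l * (1 + 1 / ε ^ 2) * (bw n * (1 / (1 + (T - Real.log n) ^ 2))) := by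
      intro n _
      have h0 : 0 ≤ ArithmeticFunction.vonMangoldt n := ArithmeticFunction.vonMangoldt_nonneg
      have hb := bw_nonneg n
      have ha := aw_nonneg δ n
      have hk := kf_nonneg hlpos (T - Real.log n)
      rcases eq_or_ne n 0 with rfl | hn0
      · simp [aw, bw]
      have hn : (0:ℝ) < n := by positivity
      by_cases hw : |T - Real.log n| ≤ ε
      · have hw' := abs_le.mp hw
        have e1 : x < n := by
          rw [hx, ← Real.lt_log_iff_exp_lt hn]
          linarith
        have e2 : (n:ℝ) ≤ y := by
          rw [hy, ← Real.log_le_iff_le_exp hn]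
          linarith
        have e3 : n ∈ Finset.Ioc ⌊x⌋₊ ⌊y⌋₊ := by
          rw [Finset.mem_Ioc]
          exact ⟨(Nat.floor_lt hxpos.le).mpr e1, Nat.le_floor e2⟩
        rw [if_pos e3]
        have e4 : aw δ n * kf l (T - Real.log n) ≤ (ArithmeticFunction.vonMangoldt n / x) * l := by
          apply mul_le_mul _ (kf_le hlpos _) hk (by positivity)
          refine (aw_le hδ n).trans ?_
          unfold bw
          gcongr
        have : 0 ≤ 4 / l * (1 + 1 / ε ^ 2) * (bw n * (1 / (1 + (T - Real.log n) ^ 2))) := by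
          positivity
        linarith
      · push Not at hw
        have hu : T - Real.log n ≠ 0 := fun h => by
          rw [h, abs_zero] at hw
          linarith
        have e1 : 0 ≤ l * (if n ∈ Finset.Ioc ⌊x⌋₊ ⌊y⌋₊ then
            ArithmeticFunction.vonMangoldt n / x else 0) := by
          split_ifs <;> positivity
        set u := T - Real.log n with hu'
        have e2 : kf l u ≤ 4 / l * (1 + 1 / ε ^ 2) * (1 / (1 + u ^ 2)) := by
          refine (kf_le' hlpos hu).trans ?_
          have hsq : ε ^ 2 ≤ u ^ 2 := by
            rw [← sq_abs u]
            gcongr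
          have : 1 / u ^ 2 ≤ (1 + 1 / ε ^ 2) * (1 / (1 + u ^ 2)) := by
            rw [mul_one_div, div_le_div_iff₀ (by positivity) (by positivity)]
            have : 1 ≤ 1 / ε ^ 2 * u ^ 2 := by
              rw [one_div_mul_eq_div, one_le_div (by positivity)]
              exact hsq
            linarith
          calc 4 / (l * u ^ 2) = 4 / l * (1 / u ^ 2) := by field_simp
            _ ≤ 4 / l * ((1 + 1 / ε ^ 2) * (1 / (1 + u ^ 2))) := by gcongr
            _ = _ := by ring
        have e3 : aw δ n * kf l u ≤ bw n * (4 / l * (1 + 1 / ε ^ 2) * (1 / (1 + u ^ 2))) :=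
          mul_le_mul (aw_le hδ n) e2 hk hb
        linarith
    refine (Finset.sum_le_sum hterm).trans ?_
    rw [Finset.sum_add_distrib, ← Finset.mul_sum, ← Finset.mul_sum]
    have f1 : ∑ n ∈ s, (if n ∈ Finset.Ioc ⌊x⌋₊ ⌊y⌋₊ then ArithmeticFunction.vonMangoldt n / x else 0)
        ≤ P / x := by
      rw [hP', Finset.sum_div, ← Finset.sum_filter]
      apply Finset.sum_le_sum_of_subset_of_nonneg
      · intro n hn
        exact (Finset.mem_filter.mp hn).2
      · intro n _ _
        exact div_nonneg ArithmeticFunction.vonMangoldt_nonneg hxpos.le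
    have f2 : 4 / l * (1 + 1 / ε ^ 2) * ∑ n ∈ s, bw n * (1 / (1 + (T - Real.log n) ^ 2)) ≤ 1 / 16 := by
      calc _ ≤ 4 / l * (1 + 1 / ε ^ 2) * C := by
            gcongr
            exact htail T s
        _ = D / l := by rw [hD]; ring
        _ = 1 / 16 := by rw [hl]; field_simp
        _ ≤ _ := le_rfl
    gcongr
  have h1 : 1 / 16 ≤ l * (P / x) := by linarith
  have h2 : l * (P / x) = l * P / x := by ring
  rw [h2, le_div_iff₀ hxpos] at h1
  rw [div_mul_eq_mul_div, div_le_iff₀ (by positivity)]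
  linarith


lemma theta_window {r : ℝ} (hr : 1 < r) : ∃ c : ℝ, 0 < c ∧ ∀ᶠ x in atTop,
    c * x ≤ Chebyshev.theta (r * x) - Chebyshev.theta x := by
  have hε : 0 < Real.log r / 3 := div_pos (Real.log_pos hr) (by norm_num)
  obtain ⟨c, hc, hw⟩ := psi_window hε
  obtain ⟨C, hC⟩ := Chebyshev.psi_sub_theta_le_mul_sqrt
  refine ⟨c / 2, by positivity, ?_⟩
  have ht : Tendsto (fun x : ℝ => Real.log x + 2 * (Real.log r / 3)) atTop atTop :=
    tendsto_atTop_add_const_right _ _ Real.tendsto_log_atTop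
  filter_upwards [ht.eventually hw, eventually_gt_atTop 0,
    Real.tendsto_sqrt_atTop.eventually (eventually_ge_atTop (2 * |C| * √r / c))] with x hx hx0 hxs
  have e1 : Real.exp (Real.log x + 2 * (Real.log r / 3) - 2 * (Real.log r / 3)) = x := by
    rw [add_sub_cancel_right, Real.exp_log hx0]
  have e2 : Real.exp (Real.log x + 2 * (Real.log r / 3) + Real.log r / 3) = r * x := by
    rw [show Real.log x + 2 * (Real.log r / 3) + Real.log r / 3 = Real.log r + Real.log x by ring,
      Real.exp_add, Real.exp_log hx0, Real.exp_log (by linarith)]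
  rw [e1, e2] at hx
  have h1 := hC (r * x)
  have h2 := Chebyshev.theta_le_psi x
  have h3 : C * √(r * x) ≤ c / 2 * x := by
    rw [Real.sqrt_mul (by linarith)]
    rw [div_le_iff₀ hc] at hxs
    have h4 : C ≤ |C| := le_abs_self C
    have h5 : √x * √x = x := Real.mul_self_sqrt hx0.le
    have h6 := Real.sqrt_nonneg x
    have h7 := Real.sqrt_nonneg r
    calc C * (√r * √x) ≤ |C| * (√r * √x) := by gcongr
      _ = (2 * |C| * √r) * √x / 2 := by ring
      _ ≤ (√x * c) * √x / 2 := by gcongr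
      _ = c / 2 * (√x * √x) := by ring
      _ = _ := by rw [h5]
  linarith

lemma pi_window {r : ℝ} (hr : 1 < r) : ∃ c : ℝ, 0 < c ∧ ∀ᶠ x : ℝ in atTop,
    (Nat.primeCounting ⌊x⌋₊ : ℝ) ≤ (1 - c) * Nat.primeCounting ⌊r * x⌋₊ := by
  obtain ⟨c, hc, hw⟩ := theta_window hr
  have hr0 : 0 < r := by linarith
  have ht : Tendsto (fun x : ℝ => r * x) atTop atTop := tendsto_id.const_mul_atTop hr0
  have h4 := Real.log_pos (show (1:ℝ) < 4 by norm_num)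
  set D := (Real.log 4 + 1) * r with hD
  have hDpos : 0 < D := by positivity
  refine ⟨c / D, by positivity, ?_⟩
  filter_upwards [hw, ht.eventually (Chebyshev.eventually_primeCounting_le one_pos),
    eventually_gt_atTop 1] with x h1 h2 hx1
  have hxy : x ≤ r * x := by nlinarith
  have hlog : 0 < Real.log (r * x) := Real.log_pos (by linarith)
  have hpi : ∀ m : ℕ, (Nat.primeCounting m : ℝ) =
      ∑ p ∈ Finset.Ioc 0 m, if p.Prime then (1:ℝ) else 0 := by
    intro m
    rw [← Nat.primesLE_card_eq_primeCounting, ← Finset.sum_filter, Finset.sum_const, nsmul_eq_mul,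
      mul_one]
    congr 2
    ext p
    simp only [Nat.mem_primesLE, Finset.mem_filter, Finset.mem_Ioc]
    exact ⟨fun h => ⟨⟨h.2.pos, h.1⟩, h.2⟩, fun h => ⟨h.1.2, h.2⟩⟩
  have hfl : ⌊x⌋₊ ≤ ⌊r * x⌋₊ := Nat.floor_le_floor hxy
  have h5 : Chebyshev.theta (r * x) - Chebyshev.theta x ≤
      ((Nat.primeCounting ⌊r * x⌋₊ : ℝ) - Nat.primeCounting ⌊x⌋₊) * Real.log (r * x) := by
    rw [hpi, hpi, Chebyshev.theta, Chebyshev.theta, Finset.sum_filter, Finset.sum_filter,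
      ← Finset.sum_Ioc_consecutive _ (Nat.zero_le _) hfl,
      ← Finset.sum_Ioc_consecutive _ (Nat.zero_le _) hfl, add_sub_cancel_left, add_sub_cancel_left,
      Finset.sum_mul]
    apply Finset.sum_le_sum
    intro p hp
    rw [Finset.mem_Ioc] at hp
    split_ifs with hpp
    · rw [one_mul]
      apply Real.log_le_log (by exact_mod_cast hpp.pos)
      exact (Nat.le_floor_iff (by linarith)).mp hp.2
    · simp
  have h6 := h1.trans h5
  rw [le_div_iff₀ hlog] at h2
  set A := (Nat.primeCounting ⌊r * x⌋₊ : ℝ)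
  set B := (Nat.primeCounting ⌊x⌋₊ : ℝ)
  have h7 : c / D * A * Real.log (r * x) ≤ c * x := by
    calc c / D * A * Real.log (r * x) = c / D * (A * Real.log (r * x)) := by ring
      _ ≤ c / D * ((Real.log 4 + 1) * (r * x)) := by gcongr
      _ = c / D * (D * x) := by rw [hD]; ring
      _ = c * x := by field_simp
  have h8 : c / D * A ≤ A - B := le_of_mul_le_mul_right (h7.trans h6) hlog
  linarith

lemma U_window (U : Set ℕ) (γ : ℝ) (hγ : 0 < γ)
    (hU : Filter.Tendsto
      (fun n : ℕ => ({p ∈ U | p ≤ n}.ncard : ℝ) / ({p : ℕ | Nat.Prime p ∧ p ≤ n}.ncard : ℝ))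
      Filter.atTop (nhds γ)) {r : ℝ} (hr : 1 < r) :
    ∀ᶠ x : ℝ in atTop, ∃ p ∈ U, x < p ∧ (p:ℝ) ≤ r * x := by
  have hP : ∀ n : ℕ, {p : ℕ | Nat.Prime p ∧ p ≤ n}.ncard = Nat.primeCounting n := by
    intro n
    rw [← Nat.primesLE_card_eq_primeCounting, ← Set.ncard_coe_finset]
    congr 1
    ext p
    simp [Nat.mem_primesLE, and_comm]
  simp_rw [hP] at hU
  obtain ⟨c, hc, hw⟩ := pi_window hr
  have hη : 0 < γ * c / 4 := by positivity
  have hev : ∀ᶠ n : ℕ in atTop, (γ - γ * c / 4) * Nat.primeCounting n ≤ ({p ∈ U | p ≤ n}.ncard : ℝ) ∧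
      ({p ∈ U | p ≤ n}.ncard : ℝ) ≤ (γ + γ * c / 4) * Nat.primeCounting n ∧
      (0:ℝ) < Nat.primeCounting n := by
    filter_upwards [hU.eventually (Ioo_mem_nhds (show γ - γ * c / 4 < γ by linarith)
      (show γ < γ + γ * c / 4 by linarith)), eventually_ge_atTop 2] with n hn hn2
    have hpos : (0:ℝ) < Nat.primeCounting n := by
      have := Nat.monotone_primeCounting hn2
      have h2 : Nat.primeCounting 2 = 1 := by decide
      rw [h2] at this
      exact_mod_cast this
    rw [lt_div_iff₀ hpos, div_lt_iff₀ hpos] at hn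
    exact ⟨hn.1.le, hn.2.le, hpos⟩
  have hf := tendsto_nat_floor_atTop (α := ℝ)
  have ht : Tendsto (fun x : ℝ => r * x) atTop atTop := tendsto_id.const_mul_atTop (by linarith)
  filter_upwards [hw, hf.eventually hev, (hf.comp ht).eventually hev, eventually_gt_atTop 0] with
    x h1 h2 h3 hx
  by_contra! hcon
  have hxy : x ≤ r * x := by nlinarith
  have heq : {p ∈ U | p ≤ ⌊r * x⌋₊} = {p ∈ U | p ≤ ⌊x⌋₊} := by
    ext p
    simp only [Set.mem_ofPred_eq]
    refine ⟨fun ⟨hp, hle⟩ => ⟨hp, ?_⟩, fun ⟨hp, hle⟩ => ⟨hp, hle.trans (Nat.floor_le_floor hxy)⟩⟩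
    by_contra! hlt
    have h4 := hcon p hp ((Nat.floor_lt hx.le).mp hlt)
    have h5 := (Nat.le_floor_iff (by nlinarith)).mp hle
    linarith
  simp only [Function.comp] at h3
  rw [heq] at h3
  obtain ⟨a1, -, a3⟩ := h3
  obtain ⟨-, b2, -⟩ := h2
  set A := (Nat.primeCounting ⌊r * x⌋₊ : ℝ)
  set B := (Nat.primeCounting ⌊x⌋₊ : ℝ)
  have k1 : (γ - γ * c / 4) * A ≤ (γ + γ * c / 4) * ((1 - c) * A) :=
    (a1.trans b2).trans (by gcongr)
  have k2 : γ - γ * c / 4 ≤ (γ + γ * c / 4) * (1 - c) := by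
    rw [← mul_assoc] at k1
    exact le_of_mul_le_mul_right k1 a3
  nlinarith [mul_pos hγ hc, mul_pos hη hc]

/-- Corollary: if `U` is a set of primes with positive relative density, then
`U` is fractionally dense in the positive reals. -/
theorem stmt_6 (U : Set ℕ) (hUP : ∀ p ∈ U, Nat.Prime p) (γ : ℝ) (hγ : 0 < γ)
    (hU : Filter.Tendsto
      (fun n : ℕ => ({p ∈ U | p ≤ n}.ncard : ℝ) / ({p : ℕ | Nat.Prime p ∧ p ≤ n}.ncard : ℝ))
      Filter.atTop (nhds γ)) :
    Set.Ioi (0 : ℝ) ⊆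
      closure {x : ℝ | ∃ p ∈ U, ∃ q ∈ U, x = (p : ℝ) / (q : ℝ)} := by
  intro a ha
  have ha : 0 < a := ha
  rw [Metric.mem_closure_iff]
  intro ε hε
  have hr : 1 < 1 + ε / (2 * a) := by
    have : 0 < ε / (2 * a) := by positivity
    linarith
  have h1 := U_window U γ hγ hU hr
  have h2 := U_window U γ hγ hU one_lt_two
  obtain ⟨X, hX⟩ := eventually_atTop.mp h1
  obtain ⟨y, ⟨q, hq, hyq, -⟩, hy⟩ := (h2.and (eventually_ge_atTop (max (X / a) 0))).exists
  have hq0 : (0:ℝ) < q := lt_of_le_of_lt ((le_max_right _ _).trans hy) hyq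
  have hXq : X ≤ a * q := by
    have : X / a ≤ q := ((le_max_left _ _).trans hy).trans hyq.le
    rw [div_le_iff₀ ha] at this
    linarith
  obtain ⟨p, hp, hp1, hp2⟩ := hX (a * q) hXq
  refine ⟨p / q, ⟨p, hp, q, hq, rfl⟩, ?_⟩
  rw [Real.dist_eq, abs_sub_comm, abs_lt]
  have k1 : a < p / q := by rwa [lt_div_iff₀ hq0]
  have k2 : (p:ℝ) / q ≤ a + ε / 2 := by
    rw [div_le_iff₀ hq0]
    refine hp2.trans (le_of_eq ?_)
    field_simp
  constructor <;> linarith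
end

section
/- Let a, b, m, n be natural numbers with m ≥ 2 and n ≥ 2 such that gcd(a, m) = 1 and gcd(b, n) = 1. Then the set { p/q : p and q are prime numbers, p ≡ a (mod m), q ≡ b (mod n) } is dense in ℝ_{>0}. -/
open Complex MeasureTheory Filter Topology

noncomputable def kerG (t : ℝ) : ℝ := (Real.pi - t) * Real.cos t + 3 * Real.sin t

lemma kerG_cont : Continuous kerG := by unfold kerG; fun_prop

lemma kerG_bound {t : ℝ} (h0 : 0 ≤ t) (h1 : t ≤ Real.pi) : |kerG t| ≤ Real.pi + 3 := by
  unfold kerG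
  have hc := Real.abs_cos_le_one t
  have hs := Real.abs_sin_le_one t
  calc _ ≤ |(Real.pi - t) * Real.cos t| + |3 * Real.sin t| := abs_add_le _ _
    _ = (Real.pi - t) * |Real.cos t| + 3 * |Real.sin t| := by
        rw [abs_mul, abs_mul, abs_of_nonneg (by linarith : 0 ≤ Real.pi - t)]; norm_num
    _ ≤ Real.pi * 1 + 3 * 1 := by
        gcongr; linarith
    _ = _ := by ring

lemma kerG_int (u : ℝ) (hu : 2 ≤ u ^ 2) :
    ∫ t in (0:ℝ)..Real.pi, kerG t * Real.cos (u * t) ≤ 0 := by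
  have hne : (1 - u ^ 2) ≠ 0 := by intro h; linarith
  set α : ℝ := -u / (1 - u ^ 2) with hα
  set β : ℝ := 1 / (1 - u ^ 2) with hβ
  set κ : ℝ := -(4 - 2 * u ^ 2) / (1 - u ^ 2) ^ 2 with hκ
  set γ : ℝ := α + κ * u with hγ
  have e1 : α + β * u = 0 := by rw [hα, hβ]; field_simp; ring
  have e2 : α * u + β = 1 := by rw [hα, hβ]; field_simp; ring
  have e4 : -β + γ * u - κ = 3 := by rw [hγ, hα, hβ, hκ]; field_simp; ring
  have hd : ∀ t ∈ Set.uIcc 0 Real.pi, HasDerivAt (fun t : ℝ =>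
      (Real.pi - t) * (α * (Real.cos t * Real.sin (u * t)) + β * (Real.sin t * Real.cos (u * t)))
      + γ * (Real.sin t * Real.sin (u * t)) + κ * (Real.cos t * Real.cos (u * t)))
      (kerG t * Real.cos (u * t)) t := by
    intro t _
    have hu' : HasDerivAt (fun t : ℝ => u * t) u t := by
      simpa using (hasDerivAt_id t).const_mul u
    have hsu := hu'.sin
    have hcu := hu'.cos
    have hs := Real.hasDerivAt_sin t
    have hc := Real.hasDerivAt_cos t
    have hP : HasDerivAt (fun t : ℝ => Real.pi - t) (-1) t := by
      simpa using (hasDerivAt_id t).const_sub Real.pi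
    have := ((hP.mul (((hc.mul hsu).const_mul α).add ((hs.mul hcu).const_mul β))).add
      ((hs.mul hsu).const_mul γ)).add ((hc.mul hcu).const_mul κ)
    refine this.congr_deriv ?_
    unfold kerG
    simp only [Pi.mul_apply, Pi.add_apply]
    generalize Real.cos t = C
    generalize Real.sin t = S
    generalize Real.cos (u * t) = c
    generalize Real.sin (u * t) = s
    linear_combination (-(Real.pi - t) * S * s) * e1 + ((Real.pi - t) * C * c) * e2
      + S * c * e4 + C * s * hγ
  rw [intervalIntegral.integral_eq_sub_of_hasDerivAt hd
    ((kerG_cont.mul (by fun_prop)).intervalIntegrable _ _)]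
  simp only [Real.cos_pi, Real.sin_pi, Real.sin_zero, Real.cos_zero, mul_zero]
  have hk : 0 ≤ κ := by rw [hκ]; apply div_nonneg; linarith; positivity
  have := Real.neg_one_le_cos (u * Real.pi)
  nlinarith

noncomputable def DS (f : ℕ → ℝ) (s : ℂ) : ℂ := ∑' n, (f n : ℂ) * cexp (-s * Real.log n)

lemma term_norm (f : ℕ → ℝ) (hf : ∀ n, 0 ≤ f n) (s : ℂ) (n : ℕ) :
    ‖(f n : ℂ) * cexp (-s * Real.log n)‖ = f n * Real.exp (-s.re * Real.log n) := by
  rw [norm_mul, Complex.norm_exp, Complex.norm_real, Real.norm_of_nonneg (hf n),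
    Complex.re_mul_ofReal, Complex.neg_re]

lemma DS_cont (f : ℕ → ℝ) (hf : ∀ n, 0 ≤ f n) {σ : ℝ}
    (hs : Summable fun n => f n * Real.exp (-σ * Real.log n)) :
    Continuous fun t : ℝ => DS f (σ + t * I) := by
  unfold DS
  refine continuous_tsum (fun n => by fun_prop) hs ?_
  intro n t
  rw [term_norm f hf]; simp

lemma DS_int (f g : ℕ → ℝ) (hf : ∀ n, 0 ≤ f n) (hg : ∀ n, 0 ≤ g n) {σ : ℝ}
    (hsf : Summable fun n => f n * Real.exp (-σ * Real.log n))
    (hsg : Summable fun n => g n * Real.exp (-σ * Real.log n))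
    (c r : ℝ)
    (H : ∀ p q, f p ≠ 0 → g q ≠ 0 → 2 ≤ |(Real.log p - Real.log q - c) * r|) :
    ∫ t in Set.Ioc 0 Real.pi, ((kerG t : ℂ) * cexp (-(t * c * r * I)) *
      DS f (σ + (-(t * r) : ℝ) * I) * DS g (σ + (t * r : ℝ) * I)).re ≤ 0 := by
  set F : ℕ × ℕ → ℝ → ℝ := fun z t => (f z.1 * Real.exp (-σ * Real.log z.1)) *
    (g z.2 * Real.exp (-σ * Real.log z.2)) *
    (kerG t * Real.cos (((Real.log z.1 - Real.log z.2 - c) * r) * t)) with hF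
  have key : ∀ t : ℝ, ((kerG t : ℂ) * cexp (-(t * c * r * I)) *
      DS f (σ + (-(t * r) : ℝ) * I) * DS g (σ + (t * r : ℝ) * I)).re = ∑' z, F z t := by
    intro t
    unfold DS
    rw [mul_assoc, tsum_mul_tsum_of_summable_norm, ← tsum_mul_left, Complex.re_tsum]
    · refine tsum_congr fun z => ?_
      have : (kerG t : ℂ) * cexp (-(t * c * r * I)) *
        ((f z.1 : ℂ) * cexp (-(σ + (-(t * r) : ℝ) * I) * Real.log z.1) *
        ((g z.2 : ℂ) * cexp (-(σ + (t * r : ℝ) * I) * Real.log z.2))) =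
        ((((f z.1 * Real.exp (-σ * Real.log z.1)) *
    (g z.2 * Real.exp (-σ * Real.log z.2)) * kerG t : ℝ)) : ℂ) *
      cexp (((((Real.log z.1 - Real.log z.2 - c) * r) * t : ℝ) : ℂ) * I) := by
        generalize Real.log z.1 = l1
        generalize Real.log z.2 = l2
        push_cast
        have : cexp (-(t * c * r * I)) * cexp (-(σ + -(t * r) * I) * l1) *
          cexp (-(σ + (t * r) * I) * l2) =
          cexp (-σ * l1) * cexp (-σ * l2) *
          cexp (((l1 - l2 - c) * r) * t * I) := by
          simp only [← Complex.exp_add]; congr 1; ring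
        linear_combination (kerG t * f z.1 * g z.2 : ℂ) * this
      rw [this, Complex.re_ofReal_mul, Complex.exp_ofReal_mul_I_re]
      simp only [hF]; ring
    · refine Summable.mul_left _ ?_
      refine summable_mul_of_summable_norm (f := fun n => (f n : ℂ) * cexp (-(σ + (-(t * r) : ℝ) * I) * Real.log n)) (g := fun n => (g n : ℂ) * cexp (-(σ + (t * r : ℝ) * I) * Real.log n)) ?_ ?_
      · exact hsf.congr fun n => by rw [term_norm f hf]; simp
      · exact hsg.congr fun n => by rw [term_norm g hg]; simp
    · exact hsf.congr fun n => by rw [term_norm f hf]; simp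
    · exact hsg.congr fun n => by rw [term_norm g hg]; simp
  simp_rw [key]
  have hFc : ∀ z, Continuous (F z) := by
    intro z; simp only [hF]
    exact continuous_const.mul (kerG_cont.mul (by fun_prop))
  have hS := summable_mul_of_summable_norm (f := fun n => f n * Real.exp (-σ * Real.log n))
    (g := fun n => g n * Real.exp (-σ * Real.log n)) hsf.norm hsg.norm
  have hw : ∀ z : ℕ × ℕ, 0 ≤ (f z.1 * Real.exp (-σ * Real.log z.1)) *
    (g z.2 * Real.exp (-σ * Real.log z.2)) := fun z =>
    mul_nonneg (mul_nonneg (hf _) (Real.exp_pos _).le) (mul_nonneg (hg _) (Real.exp_pos _).le)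
  have hint : ∀ z, Integrable (F z) (volume.restrict (Set.Ioc 0 Real.pi)) := fun z =>
    (hFc z).integrableOn_Ioc
  have hsum : Summable fun z => ∫ t in Set.Ioc 0 Real.pi, ‖F z t‖ := by
    refine Summable.of_nonneg_of_le (fun z => integral_nonneg fun t => norm_nonneg _) ?_
      (hS.mul_right ((Real.pi + 3) * Real.pi))
    intro z
    have : ∀ t ∈ Set.Ioc 0 Real.pi, ‖F z t‖ ≤ (f z.1 * Real.exp (-σ * Real.log z.1)) *
      (g z.2 * Real.exp (-σ * Real.log z.2)) * (Real.pi + 3) := by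
      intro t ht
      simp only [hF]
      rw [norm_mul, Real.norm_of_nonneg (hw z), norm_mul]
      refine mul_le_mul_of_nonneg_left ?_ (hw z)
      have h1 := kerG_bound ht.1.le ht.2
      have h2 := Real.abs_cos_le_one (((Real.log z.1 - Real.log z.2 - c) * r) * t)
      rw [Real.norm_eq_abs, Real.norm_eq_abs]
      nlinarith [abs_nonneg (kerG t), Real.pi_pos]
    have h2 := setIntegral_mono_on (hint z).norm (integrable_const _) measurableSet_Ioc this
    refine h2.trans (le_of_eq ?_)
    simp [Real.pi_pos.le]; ring
  have := hasSum_integral_of_summable_integral_norm hint hsum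
  refine hasSum_le (fun z => ?_) this hasSum_zero
  simp only [hF]
  rw [integral_const_mul]
  by_cases h1 : f z.1 = 0
  · simp [h1]
  by_cases h2 : g z.2 = 0
  · simp [h2]
  refine mul_nonpos_of_nonneg_of_nonpos (hw z) ?_
  rw [← intervalIntegral.integral_of_le Real.pi_pos.le]
  apply kerG_int
  have := H _ _ h1 h2
  rw [← sq_abs]; nlinarith

open ArithmeticFunction.vonMangoldt in
noncomputable def primeW {m : ℕ} (a : ZMod m) (n : ℕ) : ℝ :=
  if n.Prime then residueClass a n else 0

open ArithmeticFunction.vonMangoldt in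
noncomputable def nonprimeW {m : ℕ} (a : ZMod m) (n : ℕ) : ℝ :=
  if n.Prime then 0 else residueClass a n

lemma primeW_nonneg {m : ℕ} (a : ZMod m) (n : ℕ) : 0 ≤ primeW a n := by
  unfold primeW; split_ifs
  · exact ArithmeticFunction.vonMangoldt.residueClass_nonneg a n
  · exact le_rfl

lemma nonprimeW_nonneg {m : ℕ} (a : ZMod m) (n : ℕ) : 0 ≤ nonprimeW a n := by
  unfold nonprimeW; split_ifs
  · exact le_rfl
  · exact ArithmeticFunction.vonMangoldt.residueClass_nonneg a n

lemma primeW_ne {m : ℕ} (a : ZMod m) (n : ℕ) (h : primeW a n ≠ 0) :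
    n.Prime ∧ (n : ZMod m) = a := by
  unfold primeW at h
  split_ifs at h with hp
  · exact ⟨hp, by by_contra h'; exact h (Set.indicator_of_notMem (s := {n : ℕ | (n : ZMod m) = a}) h' _)⟩
  · exact absurd rfl h

open ArithmeticFunction.vonMangoldt in
lemma term_eq_s7 {m : ℕ} (a : ZMod m) (s : ℂ) (n : ℕ) :
    LSeries.term (fun n => (residueClass a n : ℂ)) s n =
      (residueClass a n : ℂ) * cexp (-s * Real.log n) := by
  rcases eq_or_ne n 0 with rfl | hn
  · simp [residueClass_apply_zero]
  · rw [LSeries.term_of_ne_zero hn, Complex.cpow_def_of_ne_zero (by exact_mod_cast hn),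
      ← Complex.natCast_log, div_eq_mul_inv, ← Complex.exp_neg]
    congr 2; ring

open ArithmeticFunction.vonMangoldt in
lemma res_summable {m : ℕ} (a : ZMod m) {σ : ℝ} (hσ : 1 < σ) :
    Summable fun n : ℕ => residueClass a n * Real.exp (-σ * Real.log n) := by
  have h : LSeriesSummable (fun n => (residueClass a n : ℂ)) σ :=
    LSeriesSummable_of_abscissaOfAbsConv_lt_re <|
      (abscissaOfAbsConv_residueClass_le_one a).trans_lt <| by
        simpa using (by exact_mod_cast hσ : (1 : EReal) < (σ : EReal))
  have h2 := h.norm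
  refine h2.congr fun n => ?_
  rw [term_eq_s7, term_norm _ (residueClass_nonneg a)]; simp

open ArithmeticFunction.vonMangoldt in
lemma primeW_summable {m : ℕ} (a : ZMod m) {σ : ℝ} (hσ : 1 < σ) :
    Summable fun n : ℕ => primeW a n * Real.exp (-σ * Real.log n) := by
  refine Summable.of_nonneg_of_le
    (fun n => mul_nonneg (primeW_nonneg a n) (Real.exp_pos _).le) (fun n => ?_) (res_summable a hσ)
  gcongr
  unfold primeW; split_ifs
  · exact le_rfl
  · exact residueClass_nonneg a n

lemma nonprimeW_summable {m : ℕ} (a : ZMod m) :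
    Summable fun n : ℕ => nonprimeW a n / n :=
  ArithmeticFunction.vonMangoldt.summable_residueClass_non_primes_div a

lemma nonprimeW_term_le {m : ℕ} (a : ZMod m) {σ : ℝ} (hσ : 1 ≤ σ) (n : ℕ) :
    nonprimeW a n * Real.exp (-σ * Real.log n) ≤ nonprimeW a n / n := by
  rcases eq_or_ne n 0 with rfl | hn
  · simp [nonprimeW]
  · rw [div_eq_mul_inv]
    refine mul_le_mul_of_nonneg_left ?_ (nonprimeW_nonneg a n)
    have hn' : (0:ℝ) < n := by positivity
    rw [← Real.exp_log (inv_pos.mpr hn'), Real.log_inv, Real.exp_le_exp]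
    have := Real.log_natCast_nonneg n
    nlinarith

open ArithmeticFunction.vonMangoldt in
lemma primeW_bound {m : ℕ} [NeZero m] (a : ZMod m) (ha : IsUnit a) (T : ℝ) :
    ∃ M : ℝ, 0 ≤ M ∧ ∀ ε τ : ℝ, 0 < ε → ε ≤ 1 → |τ| ≤ T →
      ‖DS (primeW a) ((1 + ε : ℝ) + τ * I) - ((m.totient : ℝ)⁻¹ : ℝ) / (ε + τ * I)‖ ≤ M := by
  have hK : IsCompact (Set.Icc (1:ℝ) 2 ×ℂ Set.Icc (-T) T) := isCompact_Icc.reProdIm isCompact_Icc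
  obtain ⟨C, hC⟩ := hK.exists_bound_of_continuousOn
    ((continuousOn_LFunctionResidueClassAux a).mono fun s hs => by
      exact (Complex.mem_reProdIm.mp hs).1.1)
  have hN : 0 ≤ ∑' n : ℕ, nonprimeW a n / n :=
    tsum_nonneg fun n => div_nonneg (nonprimeW_nonneg a n) (Nat.cast_nonneg n)
  refine ⟨|C| + ∑' n : ℕ, nonprimeW a n / n, by positivity, fun ε τ h0 h1 hτ => ?_⟩
  set s : ℂ := (1 + ε : ℝ) + τ * I with hs
  have hre : s.re = 1 + ε := by simp [hs]
  have him : s.im = τ := by simp [hs]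
  have h2 := hC s (by
    rw [Complex.mem_reProdIm, hre, him]
    exact ⟨⟨by linarith, by linarith⟩, abs_le.mp hτ⟩)
  have hpn : ∀ n : ℕ, Summable fun n : ℕ => (nonprimeW a n : ℂ) * cexp (-s * Real.log n) := by
    intro _
    refine Summable.of_norm_bounded (nonprimeW_summable a) fun n => ?_
    rw [term_norm _ (nonprimeW_nonneg a)]
    exact nonprimeW_term_le a (by linarith) n
  have hpp : Summable fun n : ℕ => (primeW a n : ℂ) * cexp (-s * Real.log n) := by
    refine Summable.of_norm_bounded (primeW_summable a (by linarith : 1 < 1 + ε)) fun n => ?_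
    rw [term_norm _ (primeW_nonneg a), hre]
  have hdec : LSeries (fun n => (residueClass a n : ℂ)) s =
      DS (primeW a) s + DS (nonprimeW a) s := by
    unfold DS LSeries
    rw [← hpp.tsum_add (hpn 0)]
    refine tsum_congr fun n => ?_
    rw [term_eq_s7, ← add_mul, ← Complex.ofReal_add]
    congr 2
    unfold primeW nonprimeW
    split_ifs <;> simp
  have hnb : ‖DS (nonprimeW a) s‖ ≤ ∑' n : ℕ, nonprimeW a n / n := by
    unfold DS
    refine tsum_of_norm_bounded (nonprimeW_summable a).hasSum fun n => ?_
    rw [term_norm _ (nonprimeW_nonneg a)]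
    exact nonprimeW_term_le a (by linarith) n
  have heq := eqOn_LFunctionResidueClassAux ha (x := s) (by show 1 < s.re; linarith)
  simp only at heq
  rw [hdec] at heq
  have : DS (primeW a) s - ((m.totient : ℝ)⁻¹ : ℝ) / (ε + τ * I) =
      LFunctionResidueClassAux a s - DS (nonprimeW a) s := by
    rw [heq]
    have : s - 1 = ε + τ * I := by rw [hs]; push_cast; ring
    rw [this]; push_cast; ring
  rw [this]
  exact (norm_sub_le _ _).trans (add_le_add (h2.trans (le_abs_self _)) hnb)

def PoleBound (f : ℕ → ℝ) (A T M : ℝ) : Prop := ∀ ε τ : ℝ, 0 < ε → ε ≤ 1 → |τ| ≤ T →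
      ‖DS f ((1 + ε : ℝ) + τ * I) - (A : ℂ) / (ε + τ * I)‖ ≤ M

lemma v_ge_one (x : ℝ) : 1 ≤ ‖(1 + x * I : ℂ)‖ := by
  have := Complex.abs_re_le_norm (1 + x * I : ℂ)
  simpa using this

lemma v_ge_abs (x : ℝ) : |x| ≤ ‖(1 + x * I : ℂ)‖ := by
  have := Complex.abs_im_le_norm (1 + x * I : ℂ)
  simpa using this

lemma scaled_diff {f : ℕ → ℝ} {A M r k : ℝ} (hk : |k| = r)
    (hB : PoleBound f A (Real.pi * r) M) {ε y : ℝ} (h0 : 0 < ε) (h1 : ε ≤ 1) (hy : 0 < y)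
    (hyπ : ε * y ≤ Real.pi) :
    ‖(ε : ℂ) * DS f ((1 + ε : ℝ) + (ε * y * k : ℝ) * I) - (A : ℂ) / (1 + (y * k : ℝ) * I)‖
      ≤ ε * M := by
  have hv : (1 + (y * k : ℝ) * I : ℂ) ≠ 0 := by
    intro h
    have := v_ge_one (y * k)
    rw [h, norm_zero] at this; linarith
  have h2 := hB ε (ε * y * k) h0 h1 (by
    rw [abs_mul, abs_of_pos (mul_pos h0 hy), hk]
    have : 0 ≤ r := hk ▸ abs_nonneg k
    gcongr)
  have hε : (ε : ℂ) ≠ 0 := by exact_mod_cast h0.ne'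
  have e : (ε : ℂ) * DS f ((1 + ε : ℝ) + (ε * y * k : ℝ) * I) - (A : ℂ) / (1 + (y * k : ℝ) * I)
    = (ε : ℂ) * (DS f ((1 + ε : ℝ) + (ε * y * k : ℝ) * I) - (A : ℂ) / (ε + (ε * y * k : ℝ) * I)) := by
    have : (ε + (ε * y * k : ℝ) * I : ℂ) = ε * (1 + (y * k : ℝ) * I) := by push_cast; ring
    rw [this]
    field_simp
  rw [e, norm_mul, Complex.norm_real, Real.norm_of_nonneg h0.le]
  gcongr

lemma scaled_bound {f : ℕ → ℝ} {A M r k : ℝ} (hk : |k| = r) (hr : 0 < r) (hA : 0 ≤ A) (hM : 0 ≤ M)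
    (hB : PoleBound f A (Real.pi * r) M) {ε y : ℝ} (h0 : 0 < ε) (h1 : ε ≤ 1) (hy : 0 < y)
    (hyπ : ε * y ≤ Real.pi) :
    ‖(ε : ℂ) * DS f ((1 + ε : ℝ) + (ε * y * k : ℝ) * I)‖
      ≤ (A * (1 + 1 / r) + M * (1 + Real.pi)) / (1 + y) := by
  have hd := scaled_diff hk hB h0 h1 hy hyπ
  have h3 : ‖(ε : ℂ) * DS f ((1 + ε : ℝ) + (ε * y * k : ℝ) * I)‖ ≤
      ‖(A : ℂ) / (1 + (y * k : ℝ) * I)‖ + ε * M := by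
    have := norm_le_norm_add_norm_sub' ((ε : ℂ) * DS f ((1 + ε : ℝ) + (ε * y * k : ℝ) * I))
      ((A : ℂ) / (1 + (y * k : ℝ) * I))
    linarith
  rw [norm_div, Complex.norm_real, Real.norm_of_nonneg hA] at h3
  have g1 := v_ge_one (y * k)
  have g2 := v_ge_abs (y * k)
  rw [abs_mul, abs_of_pos hy, hk] at g2
  set N := ‖(1 + (y * k : ℝ) * I : ℂ)‖
  rw [le_div_iff₀ (by linarith)]
  have hN : 0 < N := by linarith
  have g3 : (1 + y) / N ≤ 1 + 1 / r := by
    rw [div_le_iff₀ hN]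
    have : y ≤ 1 / r * N := by
      rw [one_div, ← div_eq_inv_mul, le_div_iff₀ hr]; exact g2
    nlinarith
  calc _ ≤ (A / N + ε * M) * (1 + y) := by gcongr
    _ = A * ((1 + y) / N) + M * (ε + ε * y) := by ring
    _ ≤ _ := by gcongr

lemma scaled_lim {f : ℕ → ℝ} {A M r k : ℝ} (hk : |k| = r)
    (hB : PoleBound f A (Real.pi * r) M) {y : ℝ} (hy : 0 < y) :
    Tendsto (fun ε : ℝ => (ε : ℂ) * DS f ((1 + ε : ℝ) + (ε * y * k : ℝ) * I)) (𝓝[>] 0)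
      (𝓝 ((A : ℂ) / (1 + (y * k : ℝ) * I))) := by
  rw [tendsto_iff_norm_sub_tendsto_zero]
  have hlim : Tendsto (fun ε : ℝ => ε * M) (𝓝[>] 0) (𝓝 0) := by
    have : Continuous fun ε : ℝ => ε * M := by fun_prop
    have := this.tendsto 0
    simp only [zero_mul] at this
    exact this.mono_left nhdsWithin_le_nhds
  refine squeeze_zero' (Eventually.of_forall fun _ => norm_nonneg _) ?_ hlim
  have hm : 0 < min 1 (Real.pi / y) := lt_min one_pos (div_pos Real.pi_pos hy)
  filter_upwards [Ioo_mem_nhdsGT hm] with ε hε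
  refine scaled_diff hk hB hε.1 (hε.2.le.trans (min_le_left _ _)) hy ?_
  have := hε.2.le.trans (min_le_right _ _)
  rwa [le_div_iff₀ hy] at this

lemma main_abstract (f g : ℕ → ℝ) (hf : ∀ n, 0 ≤ f n) (hg : ∀ n, 0 ≤ g n)
    (hsf : ∀ σ : ℝ, 1 < σ → Summable fun n : ℕ => f n * Real.exp (-σ * Real.log n))
    (hsg : ∀ σ : ℝ, 1 < σ → Summable fun n : ℕ => g n * Real.exp (-σ * Real.log n))
    (c r A B M N : ℝ) (hr : 0 < r) (hA : 0 < A) (hB : 0 < B) (hM : 0 ≤ M) (hN : 0 ≤ N)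
    (hF : PoleBound f A (Real.pi * r) M) (hG : PoleBound g B (Real.pi * r) N) :
    ∃ p q : ℕ, f p ≠ 0 ∧ g q ≠ 0 ∧ |(Real.log p - Real.log q - c) * r| < 2 := by
  by_contra! H
  have hneg := fun {σ : ℝ} (hσ : 1 < σ) => DS_int f g hf hg (hsf σ hσ) (hsg σ hσ) c r H
  set Φ : ℝ → ℝ → ℂ := fun ε t => (kerG t : ℂ) * cexp (-(t * c * r * I)) *
      DS f ((1 + ε : ℝ) + (-(t * r) : ℝ) * I) * DS g ((1 + ε : ℝ) + (t * r : ℝ) * I) with hΦ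
  set Ψ : ℝ → ℝ → ℝ := fun ε => (Set.Ioc 0 Real.pi).indicator (fun t => (Φ ε t).re) with hΨ
  have hk1 : |(-r)| = r := by rw [abs_neg, abs_of_pos hr]
  have hk2 : |r| = r := abs_of_pos hr
  set K1 := A * (1 + 1 / r) + M * (1 + Real.pi)
  set K2 := B * (1 + 1 / r) + N * (1 + Real.pi)
  have hpi := Real.pi_pos
  have hK1 : 0 ≤ K1 := by positivity
  have hK2 : 0 ≤ K2 := by positivity
  have hdecomp : ∀ ε y : ℝ, (ε : ℂ) ^ 2 * Φ ε (ε * y) =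
      (kerG (ε * y) : ℂ) * cexp (-((ε * y : ℝ) * c * r * I)) *
      ((ε : ℂ) * DS f ((1 + ε : ℝ) + (ε * y * (-r) : ℝ) * I)) *
      ((ε : ℂ) * DS g ((1 + ε : ℝ) + (ε * y * r : ℝ) * I)) := by
    intro ε y
    simp only [hΦ]
    rw [show -(ε * y * r) = ε * y * (-r) by ring]
    ring
  have hre : ∀ ε y : ℝ, ε ^ 2 * (Φ ε (ε * y)).re = ((ε : ℂ) ^ 2 * Φ ε (ε * y)).re := by
    intro ε y
    rw [← Complex.ofReal_pow, Complex.re_ofReal_mul]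
  have hlimit : Tendsto (fun ε : ℝ => ∫ y in Set.Ioi (0:ℝ), ε ^ 2 * Ψ ε (ε * y)) (𝓝[>] 0)
      (𝓝 (∫ y in Set.Ioi (0:ℝ), Real.pi * A * B * (1 + (r * y) ^ 2)⁻¹)) := by
    refine tendsto_integral_filter_of_dominated_convergence
      (fun y => (Real.pi + 3) * K1 * K2 * (1 + y ^ 2)⁻¹) ?_ ?_ ?_ ?_
    · filter_upwards [self_mem_nhdsWithin] with ε (hε : 0 < ε)
      have c1 := DS_cont f hf (hsf (1 + ε) (by linarith))
      have c2 := DS_cont g hg (hsg (1 + ε) (by linarith))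
      have c3 : Continuous (fun t => (Φ ε t).re) := by
        simp only [hΦ]
        refine Complex.continuous_re.comp ?_
        refine ((Continuous.mul ?_ (by fun_prop)).mul
          (c1.comp (by fun_prop : Continuous fun t : ℝ => -(t * r)))).mul
          (c2.comp (by fun_prop : Continuous fun t : ℝ => t * r))
        exact Complex.continuous_ofReal.comp kerG_cont
      have m1 : Measurable (Ψ ε) := c3.measurable.indicator measurableSet_Ioc
      exact ((m1.comp (measurable_const_mul ε)).const_mul _).aestronglyMeasurable
    · filter_upwards [Ioo_mem_nhdsGT one_pos] with ε hε
      filter_upwards [ae_restrict_mem measurableSet_Ioi] with y hy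
      have hy : 0 < y := hy
      have hbd : 0 ≤ (Real.pi + 3) * K1 * K2 * (1 + y ^ 2)⁻¹ := by positivity
      by_cases hmem : ε * y ∈ Set.Ioc 0 Real.pi
      · simp only [hΨ]
        rw [Set.indicator_of_mem hmem, hre]
        refine (Complex.abs_re_le_norm _).trans ?_
        rw [hdecomp, norm_mul, norm_mul, norm_mul]
        have b1 := scaled_bound hk1 hr hA.le hM hF hε.1 hε.2.le hy hmem.2
        have b2 := scaled_bound hk2 hr hB.le hN hG hε.1 hε.2.le hy hmem.2
        have b3 := kerG_bound hmem.1.le hmem.2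
        have b4 : ‖cexp (-((ε * y : ℝ) * c * r * I))‖ = 1 := by
          rw [Complex.norm_exp]; simp
        rw [b4, Complex.norm_real, Real.norm_eq_abs, mul_one]
        calc _ ≤ (Real.pi + 3) * (K1 / (1 + y)) * (K2 / (1 + y)) := by gcongr
          _ = (Real.pi + 3) * K1 * K2 * ((1 + y) ^ 2)⁻¹ := by field_simp
          _ ≤ _ := by gcongr; nlinarith
      · simp only [hΨ]
        rw [Set.indicator_of_notMem hmem]; simpa using hbd
    · exact (integrable_inv_one_add_sq.const_mul _).integrableOn
    · filter_upwards [ae_restrict_mem measurableSet_Ioi] with y hy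
      have hy : 0 < y := hy
      have l1 := scaled_lim hk1 hF hy
      have l2 := scaled_lim hk2 hG hy
      have l3 : Tendsto (fun ε : ℝ => (kerG (ε * y) : ℂ) * cexp (-((ε * y : ℝ) * c * r * I)))
          (𝓝[>] 0) (𝓝 (Real.pi : ℂ)) := by
        have hc : Continuous (fun ε : ℝ => (kerG (ε * y) : ℂ) * cexp (-((ε * y : ℝ) * c * r * I))) := by
          refine Continuous.mul (Complex.continuous_ofReal.comp
            (kerG_cont.comp (by fun_prop))) (by fun_prop)
        have := hc.tendsto 0
        have e : (kerG (0 * y) : ℂ) * cexp (-((0 * y : ℝ) * c * r * I)) = Real.pi := by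
          simp [kerG]
        rw [e] at this
        exact this.mono_left nhdsWithin_le_nhds
      have l4 := (Complex.continuous_re.tendsto _).comp ((l3.mul l1).mul l2)
      have e : ((Real.pi : ℂ) * ((A : ℂ) / (1 + (y * (-r) : ℝ) * I)) *
          ((B : ℂ) / (1 + (y * r : ℝ) * I))).re = Real.pi * A * B * (1 + (r * y) ^ 2)⁻¹ := by
        have : (Real.pi : ℂ) * ((A : ℂ) / (1 + (y * (-r) : ℝ) * I)) *
          ((B : ℂ) / (1 + (y * r : ℝ) * I)) = ((Real.pi * A * B * (1 + (r * y) ^ 2)⁻¹ : ℝ) : ℂ) := by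
          have : (1 + (y * (-r) : ℝ) * I : ℂ) * (1 + (y * r : ℝ) * I) =
              ((1 + (r * y) ^ 2 : ℝ) : ℂ) := by
            push_cast
            linear_combination (-(y * r) ^ 2 : ℂ) * Complex.I_sq
          rw [Complex.ofReal_mul (Real.pi * A * B), Complex.ofReal_inv, ← this, mul_inv]
          push_cast
          ring
        rw [this, Complex.ofReal_re]
      rw [e] at l4
      refine l4.congr' ?_
      filter_upwards [Ioo_mem_nhdsGT (div_pos hpi hy)] with ε hε
      have hmem : ε * y ∈ Set.Ioc 0 Real.pi :=
        ⟨mul_pos hε.1 hy, (le_div_iff₀ hy).mp hε.2.le⟩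
      simp only [hΨ, Function.comp]
      rw [Set.indicator_of_mem hmem, hre, hdecomp]
  have hle : ∫ y in Set.Ioi (0:ℝ), Real.pi * A * B * (1 + (r * y) ^ 2)⁻¹ ≤ 0 := by
    refine le_of_tendsto hlimit ?_
    filter_upwards [self_mem_nhdsWithin] with ε (hε : 0 < ε)
    rw [integral_const_mul, integral_comp_mul_left_Ioi (Ψ ε) 0 hε, mul_zero]
    have := hneg (σ := 1 + ε) (by linarith)
    have e : ∫ t in Set.Ioi (0:ℝ), Ψ ε t = ∫ t in Set.Ioc 0 Real.pi, (Φ ε t).re := by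
      simp only [hΨ]
      rw [setIntegral_indicator measurableSet_Ioc,
        Set.inter_eq_self_of_subset_right (fun x hx => hx.1)]
    rw [e, smul_eq_mul]
    exact mul_nonpos_of_nonneg_of_nonpos (by positivity)
      (mul_nonpos_of_nonneg_of_nonpos (by positivity) this)
  have hpos : 0 < ∫ y in Set.Ioi (0:ℝ), Real.pi * A * B * (1 + (r * y) ^ 2)⁻¹ := by
    have hint : Integrable fun y : ℝ => Real.pi * A * B * (1 + (r * y) ^ 2)⁻¹ :=
      (integrable_inv_one_add_sq.comp_mul_left' hr.ne').const_mul _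
    rw [setIntegral_pos_iff_support_of_nonneg_ae
      (Eventually.of_forall fun y => by show 0 ≤ _; positivity) hint.integrableOn]
    have : Function.support (fun y : ℝ => Real.pi * A * B * (1 + (r * y) ^ 2)⁻¹) = Set.univ := by
      ext y
      simp only [Function.mem_support, Set.mem_univ, iff_true]
      positivity
    rw [this, Set.univ_inter]
    simp
  linarith

/-- Theorem 7: for `m, n ≥ 2`, `gcd(a,m) = gcd(b,n) = 1`, the set of ratios `p/q`
of primes with `p ≡ a (mod m)` and `q ≡ b (mod n)` is dense in the positive reals. -/
theorem stmt_7 (a b m n : ℕ) (hm : 2 ≤ m) (hn : 2 ≤ n)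
    (ha : Nat.gcd a m = 1) (hb : Nat.gcd b n = 1) :
    Set.Ioi (0 : ℝ) ⊆
      closure {x : ℝ | ∃ p q : ℕ, Nat.Prime p ∧ Nat.Prime q ∧
        p % m = a % m ∧ q % n = b % n ∧ x = (p : ℝ) / (q : ℝ)} := by
  intro x hx
  have hx : 0 < x := hx
  rw [Metric.mem_closure_iff]
  intro d hd
  obtain ⟨η, hη, hcont⟩ := Metric.continuous_iff.mp Real.continuous_exp (Real.log x) d hd
  haveI : NeZero m := ⟨by omega⟩
  haveI : NeZero n := ⟨by omega⟩
  have hr : 0 < 2 / η := by positivity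
  obtain ⟨M, hM, hMb⟩ := primeW_bound (a : ZMod m) ((ZMod.isUnit_iff_coprime a m).mpr ha)
    (Real.pi * (2 / η))
  obtain ⟨N, hN, hNb⟩ := primeW_bound (b : ZMod n) ((ZMod.isUnit_iff_coprime b n).mpr hb)
    (Real.pi * (2 / η))
  have hmt : 0 < m.totient := Nat.totient_pos.mpr (by omega)
  have hnt : 0 < n.totient := Nat.totient_pos.mpr (by omega)
  obtain ⟨p, q, hp, hq, hpq⟩ := main_abstract (primeW (a : ZMod m)) (primeW (b : ZMod n))
    (primeW_nonneg _) (primeW_nonneg _) (fun σ hσ => primeW_summable _ hσ)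
    (fun σ hσ => primeW_summable _ hσ) (Real.log x) (2 / η) (m.totient : ℝ)⁻¹ (n.totient : ℝ)⁻¹
    M N hr (by positivity) (by positivity) hM hN hMb hNb
  obtain ⟨hp1, hp2⟩ := primeW_ne _ _ hp
  obtain ⟨hq1, hq2⟩ := primeW_ne _ _ hq
  refine ⟨(p : ℝ) / q, ⟨p, q, hp1, hq1, (ZMod.natCast_eq_natCast_iff' _ _ _).mp hp2,
    (ZMod.natCast_eq_natCast_iff' _ _ _).mp hq2, rfl⟩, ?_⟩
  have h1 : |Real.log p - Real.log q - Real.log x| < η := by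
    rw [abs_mul, abs_of_pos hr, mul_div_assoc', div_lt_iff₀ hη] at hpq
    linarith
  have h2 := hcont (Real.log p - Real.log q) (by rwa [Real.dist_eq])
  have hp0 : (0:ℝ) < p := by exact_mod_cast hp1.pos
  have hq0 : (0:ℝ) < q := by exact_mod_cast hq1.pos
  rw [Real.exp_sub, Real.exp_log hp0, Real.exp_log hq0, Real.exp_log hx] at h2
  rwa [dist_comm]
end

section
/- Let a and m be natural numbers with m ≥ 2 and gcd(a, m) = 1, and let α > 1 be a real number. Then there exists a positive integer m₀, depending only on α, such that for every integer n ≥ m₀ the interval [α^n, α^{n+1}] contains a prime number p with p ≡ a (mod m). -/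
open Real Filter Topology MeasureTheory

noncomputable def kern (T u : ℝ) : ℝ := if u = 0 then T else 2 * (1 - cos (T * u)) / (T * u ^ 2)

lemma kern_nonneg {T : ℝ} (hT : 0 < T) (u : ℝ) : 0 ≤ kern T u := by
  unfold kern
  split_ifs
  · exact hT.le
  · have := cos_le_one (T * u)
    have : 0 ≤ 1 - cos (T * u) := by linarith
    positivity

lemma kern_le {T : ℝ} (hT : 0 < T) (u : ℝ) : kern T u ≤ T := by
  unfold kern
  split_ifs with h
  · exact le_rfl
  · have h2 : 0 < u ^ 2 := by positivity
    rw [div_le_iff₀ (by positivity)]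
    have := one_sub_sq_div_two_le_cos (x := T * u)
    nlinarith

lemma kern_mul_sq_le {T : ℝ} (hT : 0 < T) (u : ℝ) : kern T u * u ^ 2 ≤ 4 / T := by
  unfold kern
  split_ifs with h
  · subst h; simp; positivity
  · have h2 : 0 < u ^ 2 := by positivity
    have := neg_one_le_cos (T * u)
    rw [div_mul_eq_mul_div, div_le_div_iff₀ (by positivity) hT]
    have : 0 < T * u ^ 2 := by positivity
    nlinarith

lemma kern_bound {T : ℝ} (hT : 0 < T) (u : ℝ) : kern T u ≤ (T + 4 / T) * (1 / (1 + u ^ 2)) := by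
  have h1 := kern_le hT u
  have h2 := kern_mul_sq_le hT u
  rw [mul_one_div, le_div_iff₀ (by positivity)]
  linarith

lemma kern_bound' {T : ℝ} (hT : 0 < T) {δ : ℝ} (hδ : 0 < δ) (u : ℝ) (hu : δ ≤ |u|) :
    kern T u ≤ (4 / T * (1 + 1 / δ ^ 2)) * (1 / (1 + u ^ 2)) := by
  have h0 := kern_nonneg hT u
  have h2 := kern_mul_sq_le hT u
  rw [mul_one_div, le_div_iff₀ (by positivity)]
  have h3 : δ ^ 2 ≤ u ^ 2 := by rw [← sq_abs u]; gcongr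
  have h4 : kern T u ≤ 4 / T * (1 / δ ^ 2) := by
    rw [mul_one_div, le_div_iff₀ (by positivity)]
    nlinarith
  linarith

lemma kern_lower {T : ℝ} (hT : 0 < T) {u : ℝ} (hu : 0 < u) (hu' : u ≤ 1 / T) :
    T / 4 ≤ kern T u := by
  unfold kern
  rw [if_neg hu.ne', le_div_iff₀ (by positivity)]
  have h1 : T * u ≤ 1 := by rwa [le_div_iff₀' hT] at hu'
  have h0 : 0 < T * u := by positivity
  have := cos_le_one_sub_mul_cos_sq (x := T * u) (by rw [abs_of_pos h0]; linarith [pi_gt_three])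
  have hpi : 2 / π ^ 2 ≥ 1 / 8 := by
    rw [ge_iff_le, div_le_div_iff₀ (by norm_num) (by positivity)]
    nlinarith [pi_lt_four, pi_pos]
  have : 2 / π ^ 2 * (T * u) ^ 2 ≥ 1 / 8 * (T * u) ^ 2 := by gcongr
  nlinarith

open Complex in
lemma kern_fourier {T : ℝ} (hT : 0 < T) (u : ℝ) :
    ∫ t in (-T)..T, ((1 - |t| / T : ℝ) : ℂ) * Complex.exp (-(t * u * I)) = kern T u := by
  have hc : Continuous fun t : ℝ => ((1 - |t| / T : ℝ) : ℂ) * Complex.exp (-(t * u * I)) := by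
    fun_prop
  rw [← intervalIntegral.integral_add_adjacent_intervals (b := 0)
    (hc.intervalIntegrable _ _) (hc.intervalIntegrable _ _)]
  have h1 : ∫ t in (-T)..0, ((1 - |t| / T : ℝ) : ℂ) * Complex.exp (-(t * u * I))
      = ∫ t in 0..T, ((1 - |t| / T : ℝ) : ℂ) * Complex.exp ((t * u * I)) := by
    have := intervalIntegral.integral_comp_neg (a := 0) (b := T)
      (f := fun t : ℝ => ((1 - |t| / T : ℝ) : ℂ) * Complex.exp (-(t * u * I)))
    rw [neg_zero] at this
    rw [← this]
    simp
  have hc' : Continuous fun t : ℝ => ((1 - |t| / T : ℝ) : ℂ) * Complex.exp ((t * u * I)) := by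
    fun_prop
  rw [h1, ← intervalIntegral.integral_add
    (hc'.intervalIntegrable _ _) (hc.intervalIntegrable _ _)]
  have h2 : ∫ t in 0..T, (((1 - |t| / T : ℝ) : ℂ) * Complex.exp ((t * u * I)) +
      ((1 - |t| / T : ℝ) : ℂ) * Complex.exp (-(t * u * I)))
      = ∫ t in 0..T, ((2 * (1 - t / T) * Real.cos (t * u) : ℝ) : ℂ) := by
    apply intervalIntegral.integral_congr
    intro t ht
    rw [Set.uIcc_of_le hT.le] at ht
    simp only [abs_of_nonneg ht.1]
    push_cast
    rw [Complex.cos]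
    ring_nf
  rw [h2, intervalIntegral.integral_ofReal]
  congr 1
  unfold kern
  split_ifs with h
  · subst h
    simp only [mul_zero, Real.cos_zero, mul_one]
    rw [intervalIntegral.integral_eq_sub_of_hasDerivAt (f := fun t => 2 * t - t ^ 2 / T)]
    · field_simp; ring
    · intro x _
      have := ((hasDerivAt_id x).const_mul 2).sub ((hasDerivAt_pow 2 x).div_const T)
      refine this.congr_deriv ?_
      push_cast; ring
    · exact Continuous.intervalIntegrable (by fun_prop) _ _
  · rw [intervalIntegral.integral_eq_sub_of_hasDerivAt
      (f := fun t => 2 * (1 - t / T) * (Real.sin (t * u) / u) - 2 * Real.cos (t * u) / (T * u ^ 2))]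
    · simp; field_simp; ring
    · intro x _
      have hs := ((hasDerivAt_mul_const (x := x) u).sin).div_const u
      have hcs := (((hasDerivAt_mul_const (x := x) u).cos).const_mul 2).div_const (T * u ^ 2)
      have hl := (((hasDerivAt_id x).div_const T).const_sub 1).const_mul 2
      refine ((hl.mul hs).sub hcs).congr_deriv ?_
      simp; field_simp; ring
    · exact Continuous.intervalIntegrable (by fun_prop) _ _

lemma block_bound (s : Finset ℕ) (k : ℕ) (hs : ∀ n ∈ s, 1 ≤ n ∧ ⌊log (n : ℝ)⌋₊ = k) :
    ∑ n ∈ s, (ArithmeticFunction.vonMangoldt n + 1) / (n : ℝ) ≤ (log 4 + 6) * exp 1 := by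
  have hb : ∀ n ∈ s, exp k ≤ n ∧ (n : ℝ) ≤ exp (k + 1) := by
    intro n hn
    obtain ⟨h1, h2⟩ := hs n hn
    have h0 : (0 : ℝ) < n := by exact_mod_cast h1
    have hl : 0 ≤ log (n : ℝ) := log_natCast_nonneg n
    have h3 := Nat.floor_le hl
    have h4 := Nat.lt_floor_add_one (log (n : ℝ))
    rw [h2] at h3 h4
    exact ⟨(le_log_iff_exp_le h0).1 h3, (log_le_iff_le_exp h0).1 h4.le⟩
  have h1 : ∑ n ∈ s, (ArithmeticFunction.vonMangoldt n + 1) / (n : ℝ) ≤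
      ∑ n ∈ s, (ArithmeticFunction.vonMangoldt n + 1) / exp k := by
    apply Finset.sum_le_sum
    intro n hn
    have := ArithmeticFunction.vonMangoldt_nonneg (n := n)
    gcongr
    exact (hb n hn).1
  refine h1.trans ?_
  rw [← Finset.sum_div, div_le_iff₀ (exp_pos _), mul_assoc, ← exp_add, add_comm (1 : ℝ)]
  have h2 : s ⊆ Finset.Icc 0 ⌊exp ((k : ℝ) + 1)⌋₊ := by
    intro n hn
    simp only [Finset.mem_Icc, zero_le, true_and]
    exact Nat.le_floor (hb n hn).2
  have h3 := Chebyshev.psi_le_const_mul_self (exp_pos ((k : ℝ) + 1)).le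
  rw [Chebyshev.psi_eq_sum_Icc] at h3
  have h4 : ∑ n ∈ s, (ArithmeticFunction.vonMangoldt n + 1) ≤
      ∑ n ∈ Finset.Icc 0 ⌊exp ((k : ℝ) + 1)⌋₊, (ArithmeticFunction.vonMangoldt n + 1) := by
    apply Finset.sum_le_sum_of_subset_of_nonneg h2
    intro n _ _
    have := ArithmeticFunction.vonMangoldt_nonneg (n := n)
    linarith
  refine h4.trans ?_
  rw [Finset.sum_add_distrib]
  have h5 : (∑ n ∈ Finset.Icc 0 ⌊exp ((k : ℝ) + 1)⌋₊, (1 : ℝ)) ≤ 2 * exp (k + 1) := by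
    simp only [Finset.sum_const, Nat.card_Icc, nsmul_eq_mul, mul_one]
    push_cast
    have := Nat.floor_le (exp_pos ((k : ℝ) + 1)).le
    have : 1 ≤ exp ((k : ℝ) + 1) := one_le_exp (by positivity)
    linarith
  linarith

lemma summable_int_inv : Summable fun i : ℤ => 3 / (1 + (i : ℝ) ^ 2) := by
  have h : Summable fun i : ℕ => 3 / (1 + (i : ℝ) ^ 2) := by
    have := (Real.summable_one_div_nat_pow (p := 2)).2 (by norm_num)
    refine (this.mul_left 3).of_norm_bounded_eventually_nat ?_
    filter_upwards [eventually_gt_atTop 0] with n hn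
    have : (0 : ℝ) < n := by exact_mod_cast hn
    rw [Real.norm_of_nonneg (by positivity), mul_one_div]
    gcongr
    linarith
  refine Summable.of_nat_of_neg ?_ ?_ <;> simpa using h

lemma weight_bound : ∃ M : ℝ, 0 < M ∧ ∀ L : ℝ, ∀ s : Finset ℕ,
    ∑ n ∈ s, (ArithmeticFunction.vonMangoldt n + 1) / (n : ℝ) * (1 / (1 + (log n - L) ^ 2)) ≤ M := by
  set C := (log 4 + 6) * exp 1
  have hC : 0 < C := by
    have : 0 ≤ log (4 : ℝ) := log_nonneg (by norm_num)
    positivity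
  set S := ∑' i : ℤ, 3 / (1 + (i : ℝ) ^ 2)
  have hS : 0 < S := summable_int_inv.tsum_pos (fun i => by positivity) 0 (by simp)
  refine ⟨C * S, by positivity, fun L s => ?_⟩
  have hs : ∑ n ∈ s, (ArithmeticFunction.vonMangoldt n + 1) / (n : ℝ) * (1 / (1 + (log n - L) ^ 2))
      = ∑ n ∈ s.filter (1 ≤ ·), (ArithmeticFunction.vonMangoldt n + 1) / (n : ℝ) *
        (1 / (1 + (log n - L) ^ 2)) := by
    rw [Finset.sum_filter]
    refine Finset.sum_congr rfl fun n _ => ?_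
    split_ifs with h
    · rfl
    · have : n = 0 := by omega
      simp [this]
  rw [hs]
  set s' := s.filter (1 ≤ ·)
  set g : ℕ → ℕ := fun n => ⌊log (n : ℝ)⌋₊
  rw [← Finset.sum_fiberwise_of_maps_to (g := g) (t := s'.image g)
    (fun n hn => Finset.mem_image_of_mem _ hn)]
  have hk : ∀ k ∈ s'.image g, ∑ n ∈ s' with g n = k,
      (ArithmeticFunction.vonMangoldt n + 1) / (n : ℝ) * (1 / (1 + (log n - L) ^ 2)) ≤
      C * (3 / (1 + (((k : ℤ) - ⌊L⌋ : ℤ) : ℝ) ^ 2)) := by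
    intro k _
    have := block_bound (s'.filter (g · = k)) k (by
      intro n hn
      simp only [Finset.mem_filter, s'] at hn
      exact ⟨hn.1.2, hn.2⟩)
    refine le_trans ?_ (mul_le_mul_of_nonneg_right this (by positivity))
    rw [Finset.sum_mul]
    apply Finset.sum_le_sum
    intro n hn
    simp only [Finset.mem_filter] at hn
    have hv := ArithmeticFunction.vonMangoldt_nonneg (n := n)
    refine mul_le_mul_of_nonneg_left ?_ (by positivity)
    have hl : 0 ≤ log (n : ℝ) := log_natCast_nonneg n
    have h3 := Nat.floor_le hl
    have h4 := Nat.lt_floor_add_one (log (n : ℝ))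
    have hg : ⌊log (n : ℝ)⌋₊ = k := hn.2
    rw [hg] at h3 h4
    have h5 := Int.floor_le L
    have h6 := Int.lt_floor_add_one L
    rw [div_le_div_iff₀ (by positivity) (by positivity)]
    push_cast
    set x := log (n : ℝ) - L
    set y := (k : ℝ) - ⌊L⌋
    have : (y - x) ^ 2 ≤ 1 := by
      rw [sq_le_one_iff_abs_le_one, abs_le]
      constructor <;> simp only [x, y] <;> linarith
    nlinarith [sq_nonneg (y - 2 * x)]
  refine (Finset.sum_le_sum hk).trans ?_
  rw [← Finset.mul_sum]
  refine mul_le_mul_of_nonneg_left ?_ hC.le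
  have hinj : Set.InjOn (fun k : ℕ => (k : ℤ) - ⌊L⌋) (s'.image g : Finset ℕ) := by
    intro a _ b _ h
    simpa using h
  rw [← Finset.sum_image (f := fun i : ℤ => 3 / (1 + (i : ℝ) ^ 2)) hinj]
  exact summable_int_inv.sum_le_tsum _ (fun i _ => by positivity)

lemma summable_weight {c : ℕ → ℝ} (hc : ∀ n, |c n| ≤ ArithmeticFunction.vonMangoldt n + 1)
    {T : ℝ} (hT : 0 < T) (L : ℝ) :
    Summable fun n : ℕ => |c n| / n * kern T (log n - L) := by
  obtain ⟨M, hM, h⟩ := weight_bound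
  have : Summable fun n : ℕ => (ArithmeticFunction.vonMangoldt n + 1) / (n : ℝ) *
      (1 / (1 + (log n - L) ^ 2)) := by
    refine summable_of_sum_le (fun n => ?_) (h L)
    have := ArithmeticFunction.vonMangoldt_nonneg (n := n)
    positivity
  refine (this.mul_left (T + 4 / T)).of_nonneg_of_le (fun n => ?_) (fun n => ?_)
  · have := kern_nonneg hT (log n - L)
    positivity
  · have h1 := kern_bound hT (log n - L)
    have h2 := kern_nonneg hT (log n - L)
    have h3 := hc n
    have hv := ArithmeticFunction.vonMangoldt_nonneg (n := n)
    calc |c n| / n * kern T (log n - L)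
        ≤ (ArithmeticFunction.vonMangoldt n + 1) / n *
          ((T + 4 / T) * (1 / (1 + (log n - L) ^ 2))) := by gcongr
      _ = _ := by ring

open Complex in
lemma step1 {c : ℕ → ℝ} {σ : ℝ} (hσ : 1 < σ)
    (hsum : LSeriesSummable (fun n => (c n : ℂ)) σ) {T : ℝ} (hT : 0 < T) (L : ℝ) :
    ((∑' n : ℕ, c n / (n : ℝ) ^ σ * kern T (Real.log n - L) : ℝ) : ℂ) =
    ∫ t in (-T)..T, ((1 - |t| / T : ℝ) : ℂ) * Complex.exp (t * L * I) *
      LSeries (fun n => (c n : ℂ)) (σ + t * I) := by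
  have hterm : ∀ n : ℕ, ∀ t : ℝ, LSeries.term (fun n => (c n : ℂ)) (σ + t * I) n =
      ((c n / (n : ℝ) ^ σ : ℝ) : ℂ) * Complex.exp (-(t * Real.log n * I)) := by
    intro n t
    rcases Nat.eq_zero_or_pos n with rfl | hn
    · simp [Real.zero_rpow (by linarith : σ ≠ 0)]
    · have hn' : (n : ℂ) ≠ 0 := by exact_mod_cast hn.ne'
      rw [LSeries.term_of_ne_zero hn.ne', Complex.cpow_add _ _ hn', Complex.cpow_def_of_ne_zero hn' (t * I)]
      push_cast
      rw [Complex.ofReal_cpow (by positivity), Complex.exp_neg, ← Complex.natCast_log]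
      push_cast
      rw [show Complex.log n * (t * I) = t * Complex.log n * I by ring]
      field_simp
  have hnorm : ∀ n : ℕ, ∀ t : ℝ, ‖LSeries.term (fun n => (c n : ℂ)) (σ + t * I) n‖ =
      ‖LSeries.term (fun n => (c n : ℂ)) σ n‖ := by
    intro n t
    have h0 := hterm n 0
    simp only [Complex.ofReal_zero, zero_mul, add_zero, neg_zero, Complex.exp_zero, mul_one] at h0
    rw [hterm, h0, norm_mul, show (-(t * Real.log n * I) : ℂ) = ((-(t * Real.log n) : ℝ) : ℂ) * I by
      push_cast; ring, Complex.norm_exp_ofReal_mul_I, mul_one]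
  have key := intervalIntegral.hasSum_integral_of_dominated_convergence (μ := volume)
    (a := -T) (b := T)
    (F := fun (n : ℕ) (t : ℝ) => ((1 - |t| / T : ℝ) : ℂ) * Complex.exp (t * L * I) *
      LSeries.term (fun n => (c n : ℂ)) (σ + t * I) n)
    (f := fun t => ((1 - |t| / T : ℝ) : ℂ) * Complex.exp (t * L * I) *
      LSeries (fun n => (c n : ℂ)) (σ + t * I))
    (fun n _ => ‖LSeries.term (fun n => (c n : ℂ)) σ n‖) ?_ ?_ ?_ ?_ ?_
  · rw [← key.tsum_eq, Complex.ofReal_tsum]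
    refine tsum_congr fun n => ?_
    have : ∀ t : ℝ, ((1 - |t| / T : ℝ) : ℂ) * Complex.exp (t * L * I) *
      LSeries.term (fun n => (c n : ℂ)) (σ + t * I) n = ((c n / (n : ℝ) ^ σ : ℝ) : ℂ) *
      (((1 - |t| / T : ℝ) : ℂ) * Complex.exp (-(t * (Real.log n - L : ℝ) * I))) := by
      intro t
      rw [hterm, show (-(t * (Real.log n - L : ℝ) * I) : ℂ) = t * L * I + -(t * Real.log n * I) by
        push_cast; ring, Complex.exp_add]
      ring
    simp_rw [this]
    rw [intervalIntegral.integral_const_mul, kern_fourier hT, Complex.ofReal_mul]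
  · intro n
    refine Continuous.aestronglyMeasurable ?_
    simp_rw [hterm]
    fun_prop
  · intro n
    refine ae_of_all _ fun t ht => ?_
    rw [Set.uIoc_of_le (by linarith)] at ht
    rw [norm_mul, norm_mul, show (t * L * I : ℂ) = ((t * L : ℝ) : ℂ) * I by push_cast; ring,
      Complex.norm_exp_ofReal_mul_I, hnorm, mul_one, Complex.norm_real]
    refine mul_le_of_le_one_left (norm_nonneg _) ?_
    have h1 : |t| ≤ T := abs_le.2 ⟨ht.1.le, ht.2⟩
    have h2 : |t| / T ≤ 1 := (div_le_one hT).2 h1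
    have h3 : 0 ≤ |t| / T := by positivity
    rw [Real.norm_of_nonneg (by linarith)]
    linarith
  · exact ae_of_all _ fun t _ => hsum.norm
  · exact intervalIntegrable_const
  · refine ae_of_all _ fun t _ => ?_
    refine HasSum.mul_left _ ?_
    refine Summable.hasSum ?_
    rw [← summable_norm_iff]
    simp_rw [hnorm]
    exact hsum.norm

open Complex in
lemma step2 {c : ℕ → ℝ} (hc : ∀ n, |c n| ≤ ArithmeticFunction.vonMangoldt n + 1)
    {H : ℂ → ℂ} (hH : ContinuousOn H {s | 1 ≤ s.re})
    (hHc : ∀ s : ℂ, 1 < s.re → H s = LSeries (fun n => (c n : ℂ)) s)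
    (hsum : ∀ s : ℂ, 1 < s.re → LSeriesSummable (fun n => (c n : ℂ)) s)
    {T : ℝ} (hT : 0 < T) (L : ℝ) :
    ((∑' n : ℕ, c n / (n : ℝ) * kern T (Real.log n - L) : ℝ) : ℂ) =
    ∫ t in (-T)..T, ((1 - |t| / T : ℝ) : ℂ) * Complex.exp (t * L * I) * H (1 + t * I) := by
  have hl : Tendsto (fun σ : ℝ => ((∑' n : ℕ, c n / (n : ℝ) ^ σ * kern T (Real.log n - L) : ℝ) : ℂ))
      (𝓝[>] 1) (𝓝 ((∑' n : ℕ, c n / (n : ℝ) * kern T (Real.log n - L) : ℝ) : ℂ)) := by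
    refine (Complex.continuous_ofReal.tendsto _).comp ?_
    refine tendsto_tsum_of_dominated_convergence (summable_weight hc hT L) ?_ ?_
    · intro n
      rcases Nat.eq_zero_or_pos n with rfl | hn
      · have : Tendsto (fun σ : ℝ => (0 : ℝ)) (𝓝[>] (1 : ℝ)) (𝓝 0) := tendsto_const_nhds
        refine (this.congr' ?_).trans (by simp)
        filter_upwards [self_mem_nhdsWithin] with σ hσ
        have : σ ≠ 0 := by have := Set.mem_Ioi.1 hσ; linarith
        simp [Real.zero_rpow this]
      · have hn' : (0 : ℝ) < n := by exact_mod_cast hn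
        have h1 : Continuous fun σ : ℝ => c n / (n : ℝ) ^ σ * kern T (Real.log n - L) := by
          refine Continuous.mul ?_ continuous_const
          refine continuous_const.div ?_ (fun σ => (Real.rpow_pos_of_pos hn' σ).ne')
          exact Real.continuous_const_rpow hn'.ne'
        have := (h1.tendsto 1).mono_left (nhdsWithin_le_nhds (s := Set.Ioi 1))
        simpa using this
    · filter_upwards [self_mem_nhdsWithin] with σ hσ n
      have hσ : 1 < σ := hσ
      have hk := kern_nonneg hT (Real.log n - L)
      rw [norm_mul, norm_div, Real.norm_eq_abs, Real.norm_of_nonneg hk,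
        Real.norm_of_nonneg (by positivity)]
      rcases Nat.eq_zero_or_pos n with rfl | hn
      · simp [Real.zero_rpow (by linarith : σ ≠ 0)]
      · have hn' : (1 : ℝ) ≤ n := by exact_mod_cast hn
        gcongr
        calc (n : ℝ) = (n : ℝ) ^ (1 : ℝ) := (Real.rpow_one _).symm
          _ ≤ _ := Real.rpow_le_rpow_of_exponent_le hn' hσ.le
  refine tendsto_nhds_unique hl ?_
  have hcpt : IsCompact (Set.Icc (1 : ℝ) 2 ×ˢ Set.Icc (-T) T) := isCompact_Icc.prod isCompact_Icc
  have hcont : ContinuousOn (fun p : ℝ × ℝ => H (p.1 + p.2 * I)) (Set.Ici (1 : ℝ) ×ˢ Set.univ) := by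
    refine hH.comp (by fun_prop) ?_
    intro p hp
    simpa using hp.1
  obtain ⟨B, hB⟩ := hcpt.exists_bound_of_continuousOn (hcont.mono (by
    rintro p ⟨h1, h2⟩; exact ⟨h1.1, trivial⟩))
  have hcσ : ∀ σ : ℝ, 1 ≤ σ → Continuous fun t : ℝ => H (σ + t * I) := by
    intro σ hσ
    exact hcont.comp_continuous (f := fun t : ℝ => (σ, t)) (by fun_prop) (fun t => ⟨hσ, trivial⟩)
  have hr : Tendsto (fun σ : ℝ => ∫ t in (-T)..T, ((1 - |t| / T : ℝ) : ℂ) * Complex.exp (t * L * I) *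
      H (σ + t * I)) (𝓝[>] 1) (𝓝 (∫ t in (-T)..T, ((1 - |t| / T : ℝ) : ℂ) *
        Complex.exp (t * L * I) * H (1 + t * I))) := by
    refine intervalIntegral.tendsto_integral_filter_of_dominated_convergence (fun _ => B) ?_ ?_ ?_ ?_
    · filter_upwards [self_mem_nhdsWithin] with σ hσ
      have h1 := hcσ σ (le_of_lt hσ)
      have h2 : Continuous fun t : ℝ => ((1 - |t| / T : ℝ) : ℂ) * Complex.exp (t * L * I) := by
        fun_prop
      exact (h2.mul h1).aestronglyMeasurable
    · have : Set.Ioo (1 : ℝ) 2 ∈ 𝓝[>] (1 : ℝ) := Ioo_mem_nhdsGT (by norm_num)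
      filter_upwards [this] with σ hσ
      refine ae_of_all _ fun t ht => ?_
      rw [Set.uIoc_of_le (by linarith)] at ht
      rw [norm_mul, norm_mul, show (t * L * I : ℂ) = ((t * L : ℝ) : ℂ) * I by push_cast; ring,
        Complex.norm_exp_ofReal_mul_I, mul_one, Complex.norm_real]
      refine le_trans (mul_le_of_le_one_left (norm_nonneg _) ?_)
        (hB (σ, t) ⟨⟨hσ.1.le, hσ.2.le⟩, ⟨ht.1.le, ht.2⟩⟩)
      have h1 : |t| ≤ T := abs_le.2 ⟨ht.1.le, ht.2⟩
      have h2 : |t| / T ≤ 1 := (div_le_one hT).2 h1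
      have h3 : 0 ≤ |t| / T := by positivity
      rw [Real.norm_of_nonneg (by linarith)]
      linarith
    · exact intervalIntegrable_const
    · refine ae_of_all _ fun t _ => ?_
      refine Tendsto.const_mul _ ?_
      have h1 := (hcont (1, t) ⟨by simp, trivial⟩).tendsto
      have h2 : Tendsto (fun σ : ℝ => (σ, t)) (𝓝[>] 1) (𝓝[Set.Ici (1 : ℝ) ×ˢ Set.univ] (1, t)) := by
        refine tendsto_nhdsWithin_iff.2 ⟨?_, ?_⟩
        · exact ((by fun_prop : Continuous fun σ : ℝ => (σ, t)).tendsto 1).mono_left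
            nhdsWithin_le_nhds
        · filter_upwards [self_mem_nhdsWithin] with σ hσ
          exact ⟨Set.mem_Ici.2 (le_of_lt hσ), trivial⟩
      simpa [Function.comp_def] using h1.comp h2
  refine hr.congr' ?_
  filter_upwards [self_mem_nhdsWithin] with σ hσ
  have hσ : 1 < σ := hσ
  rw [step1 hσ (hsum _ (by simpa using hσ)) hT]
  refine intervalIntegral.integral_congr fun t _ => ?_
  rw [hHc _ (by simpa using hσ)]

open Complex in
lemma tauber {c : ℕ → ℝ} (hc : ∀ n, |c n| ≤ ArithmeticFunction.vonMangoldt n + 1)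
    {H : ℂ → ℂ} (hH : ContinuousOn H {s | 1 ≤ s.re})
    (hHc : ∀ s : ℂ, 1 < s.re → H s = LSeries (fun n => (c n : ℂ)) s)
    (hsum : ∀ s : ℂ, 1 < s.re → LSeriesSummable (fun n => (c n : ℂ)) s)
    {T : ℝ} (hT : 0 < T) :
    Tendsto (fun L : ℝ => ∑' n : ℕ, c n / (n : ℝ) * kern T (Real.log n - L)) atTop (𝓝 0) := by
  have h1 := Real.tendsto_integral_exp_smul_cocompact
    ((Set.Ioc (-T) T).indicator fun t : ℝ => ((1 - |t| / T : ℝ) : ℂ) * H (1 + t * I))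
  have h2 : Tendsto (fun L : ℝ => -(L / (2 * π))) atTop (cocompact ℝ) := by
    have : Tendsto (fun L : ℝ => -(L / (2 * π))) atTop atBot :=
      tendsto_neg_atTop_atBot.comp (tendsto_id.atTop_div_const (by positivity))
    exact this.mono_right atBot_le_cocompact
  have h3 := h1.comp h2
  have h4 : Tendsto (fun L : ℝ => ((∑' n : ℕ, c n / (n : ℝ) * kern T (Real.log n - L) : ℝ) : ℂ))
      atTop (𝓝 0) := by
    refine h3.congr fun L => ?_
    rw [step2 hc hH hHc hsum hT, intervalIntegral.integral_of_le (by linarith),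
      ← integral_indicator measurableSet_Ioc]
    simp only [Function.comp]
    refine integral_congr_ae (ae_of_all _ fun t => ?_)
    simp only [Set.indicator]
    split_ifs
    · rw [Circle.smul_def, Real.fourierChar_apply, smul_eq_mul]
      have : (((2 * π * -(t * -(L / (2 * π))) : ℝ) : ℂ) * I) = t * L * I := by
        congr 1
        rw [← Complex.ofReal_mul]
        congr 1
        field_simp
      rw [this]
      ring
    · simp
  simpa [Function.comp_def] using (Complex.continuous_re.tendsto 0).comp h4

lemma kern_sum_lower {T : ℝ} (hT : 1 ≤ T) {L : ℝ} (hL : 2 * T ≤ exp L) :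
    1 / (8 * exp 1) ≤ ∑' n : ℕ, 1 / (n : ℝ) * kern T (log n - L) := by
  have hT0 : 0 < T := by linarith
  have hsm : Summable fun n : ℕ => 1 / (n : ℝ) * kern T (log n - L) := by
    have := summable_weight (c := fun _ => 1)
      (fun n => by have := ArithmeticFunction.vonMangoldt_nonneg (n := n); simp) hT0 L
    simpa using this
  set y := exp L with hy
  have hy0 : 0 < y := exp_pos L
  set z := y * exp (1 / T) with hz
  have hz0 : 0 < z := by positivity
  have he : 1 + 1 / T ≤ exp (1 / T) := by linarith [add_one_le_exp (1 / T)]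
  have hyz : y + y / T ≤ z := by
    calc y + y / T = y * (1 + 1 / T) := by ring
      _ ≤ z := by rw [hz]; gcongr
  have hz1 : z ≤ y * exp 1 := by
    rw [hz]; gcongr
    exact (div_le_one hT0).2 hT
  have hterm : ∀ n ∈ Finset.Ioc ⌊y⌋₊ ⌊z⌋₊, T / (4 * (y * exp 1)) ≤
      1 / (n : ℝ) * kern T (log n - L) := by
    intro n hn
    rw [Finset.mem_Ioc] at hn
    have h1 : y < n := (Nat.floor_lt hy0.le).1 hn.1
    have h2 : (n : ℝ) ≤ z := (Nat.le_floor_iff hz0.le).1 hn.2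
    have hn0 : (0 : ℝ) < n := hy0.trans h1
    have h3 : 0 < log n - L := by
      have := log_lt_log hy0 h1
      rw [hy, log_exp] at this
      linarith
    have h4 : log n - L ≤ 1 / T := by
      have := log_le_log hn0 h2
      rw [hz, hy, ← exp_add, log_exp] at this
      linarith
    have h5 := kern_lower hT0 h3 h4
    calc T / (4 * (y * exp 1)) = 1 / (y * exp 1) * (T / 4) := by field_simp
      _ ≤ 1 / (n : ℝ) * kern T (log n - L) := by
        gcongr
        exact h2.trans hz1
  have hcard : y / (2 * T) ≤ (Finset.Ioc ⌊y⌋₊ ⌊z⌋₊).card := by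
    rw [Nat.card_Ioc]
    have h1 : ⌊y⌋₊ ≤ ⌊z⌋₊ := Nat.floor_mono (by have : 0 < y / T := by positivity
                                                linarith)
    rw [Nat.cast_sub h1]
    have h2 := Nat.floor_le hy0.le
    have h3 := Nat.lt_floor_add_one z
    have h4 : 1 ≤ y / (2 * T) := (one_le_div (by positivity)).2 hL
    have h5 : y / T = y / (2 * T) + y / (2 * T) := by field_simp; norm_num
    linarith
  have hnn : ∀ n : ℕ, 0 ≤ 1 / (n : ℝ) * kern T (log n - L) := fun n => by
    have := kern_nonneg hT0 (log n - L)
    positivity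
  calc 1 / (8 * exp 1) = y / (2 * T) * (T / (4 * (y * exp 1))) := by field_simp; norm_num
    _ ≤ (Finset.Ioc ⌊y⌋₊ ⌊z⌋₊).card * (T / (4 * (y * exp 1))) := by gcongr
    _ ≤ ∑ n ∈ Finset.Ioc ⌊y⌋₊ ⌊z⌋₊, 1 / (n : ℝ) * kern T (log n - L) := by
      have := Finset.card_nsmul_le_sum _ _ _ hterm
      simpa [nsmul_eq_mul] using this
    _ ≤ _ := hsm.sum_le_tsum _ (fun n _ => hnn n)

open ArithmeticFunction.vonMangoldt in
lemma tauber_res {q : ℕ} [NeZero q] {a : ZMod q} (ha : IsUnit a) {T : ℝ} (hT : 0 < T) :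
    Tendsto (fun L : ℝ => ∑' n : ℕ, (residueClass a n - (q.totient : ℝ)⁻¹) / (n : ℝ) *
      kern T (log n - L)) atTop (𝓝 0) := by
  set A : ℝ := (q.totient : ℝ)⁻¹ with hA
  have hq : (1 : ℝ) ≤ q.totient := by exact_mod_cast Nat.totient_pos.2 (NeZero.pos q)
  have hA0 : 0 ≤ A := by positivity
  have hA1 : A ≤ 1 := inv_le_one_of_one_le₀ hq
  set Z : ℂ → ℂ := Function.update (fun s => riemannZeta s - 1 / (s - 1)) 1
    (Real.eulerMascheroniConstant : ℂ) with hZ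
  have hZc : Continuous Z := by
    rw [continuous_iff_continuousAt]
    intro s
    by_cases hs : s = 1
    · subst hs
      rw [hZ, continuousAt_update_same]
      exact tendsto_riemannZeta_sub_one_div
    · rw [hZ, continuousAt_update_of_ne hs]
      refine (differentiableAt_riemannZeta hs).continuousAt.sub ?_
      exact continuousAt_const.div (by fun_prop) (sub_ne_zero.2 hs)
  have hsr : ∀ s : ℂ, 1 < s.re → LSeriesSummable (fun n => (residueClass a n : ℂ)) s := by
    intro s hs
    refine LSeriesSummable_of_abscissaOfAbsConv_lt_re ?_
    exact (abscissaOfAbsConv_residueClass_le_one a).trans_lt (by exact_mod_cast hs)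
  have hs1 : ∀ s : ℂ, 1 < s.re → LSeriesSummable ((A : ℂ) • (1 : ℕ → ℂ)) s := by
    intro s hs
    exact (LSeriesSummable_one_iff.2 hs).smul _
  have hfun : (fun n => ((residueClass a n - A : ℝ) : ℂ)) =
      (fun n => (residueClass a n : ℂ)) - (A : ℂ) • (1 : ℕ → ℂ) := by
    funext n
    simp
  refine tauber (H := fun s => LFunctionResidueClassAux a s - A * Z s) ?_ ?_ ?_ ?_ hT
  · intro n
    have h1 := residueClass_nonneg a n
    have h2 := residueClass_le a n
    rw [abs_le]
    constructor <;> linarith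
  · exact (continuousOn_LFunctionResidueClassAux a).sub (continuous_const.mul hZc).continuousOn
  · intro s hs
    have hne : s ≠ 1 := by rintro rfl; simp at hs
    rw [hfun, LSeries_sub (hsr s hs) (hs1 s hs), LSeries_smul, LSeries_one_eq_riemannZeta hs]
    rw [eqOn_LFunctionResidueClassAux ha hs, hZ, Function.update_of_ne hne, hA]
    push_cast
    ring
  · intro s hs
    rw [hfun]
    exact (hsr s hs).sub (hs1 s hs)

open ArithmeticFunction.vonMangoldt in
lemma key {q : ℕ} [NeZero q] {a : ZMod q} (ha : IsUnit a) {δ : ℝ} (hδ : 0 < δ) :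
    ∀ᶠ L : ℝ in atTop, ∃ p : ℕ, p.Prime ∧ (p : ZMod q) = a ∧ |log p - L| < δ := by
  set A : ℝ := (q.totient : ℝ)⁻¹ with hA
  have hq : (1 : ℝ) ≤ q.totient := by exact_mod_cast Nat.totient_pos.2 (NeZero.pos q)
  have hA0 : 0 < A := by positivity
  set ε := A * (1 / (8 * exp 1)) with hε
  have hε0 : 0 < ε := by positivity
  obtain ⟨M, hM, hMb⟩ := weight_bound
  set D := 4 * (1 + 1 / δ ^ 2) * M with hD
  have hD0 : 0 < D := by positivity
  set T := max 1 (4 * D / ε) with hTd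
  have hT1 : 1 ≤ T := le_max_left _ _
  have hT0 : 0 < T := by linarith
  have hDT : D / T ≤ ε / 4 := by
    have : 4 * D / ε ≤ T := le_max_right _ _
    rw [div_le_iff₀ hε0] at this
    rw [div_le_iff₀ hT0]
    linarith
  set g : ℕ → ℝ := fun n => (if n.Prime then 0 else residueClass a n) / n with hg
  set h : ℕ → ℝ := fun n => (if n.Prime then residueClass a n else 0) / n with hh
  have hr0 := residueClass_nonneg a
  have hg0 : ∀ n, 0 ≤ g n := fun n => by
    have := hr0 n
    simp only [hg]; positivity
  have hh0 : ∀ n, 0 ≤ h n := fun n => by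
    have := hr0 n
    simp only [hh]; positivity
  have hgs : Summable g := summable_residueClass_non_primes_div a
  have hgsk : ∀ L : ℝ, Summable fun n : ℕ => g n * kern T (log n - L) := fun L => by
    refine (hgs.mul_right T).of_nonneg_of_le (fun n => mul_nonneg (hg0 n) (kern_nonneg hT0 _))
      (fun n => mul_le_mul_of_nonneg_left (kern_le hT0 _) (hg0 n))
  have hgl : Tendsto (fun L : ℝ => ∑' n : ℕ, g n * kern T (log n - L)) atTop (𝓝 0) := by
    have : Tendsto (fun L : ℝ => ∑' n : ℕ, g n * kern T (log n - L)) atTop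
        (𝓝 (∑' n : ℕ, (0 : ℝ))) := by
      refine tendsto_tsum_of_dominated_convergence (hgs.mul_right T) ?_ ?_
      · intro n
        have h1 : Tendsto (fun L : ℝ => (L - log n) ^ 2) atTop atTop :=
          (tendsto_pow_atTop two_ne_zero).comp (tendsto_atTop_add_const_right _ _ tendsto_id)
        have h2 : Tendsto (fun L : ℝ => (T + 4 / T) * (1 / (1 + (log n - L) ^ 2))) atTop (𝓝 0) := by
          have h3 := ((tendsto_inv_atTop_zero.comp
            (tendsto_atTop_add_const_left _ 1 h1)).const_mul (T + 4 / T))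
          rw [mul_zero] at h3
          refine h3.congr fun L => ?_
          simp only [Function.comp]
          rw [one_div, ← neg_sub L, neg_sq]
        have h4 := squeeze_zero (fun L => kern_nonneg hT0 (log n - L))
          (fun L => kern_bound hT0 (log n - L)) h2
        simpa using h4.const_mul (g n)
      · refine Eventually.of_forall fun L n => ?_
        rw [Real.norm_of_nonneg (mul_nonneg (hg0 n) (kern_nonneg hT0 _))]
        exact mul_le_mul_of_nonneg_left (kern_le hT0 _) (hg0 n)
    simpa using this
  have e1 := (tauber_res ha hT0).eventually (lt_mem_nhds (show -(ε / 4) < 0 by linarith))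
  have e2 := hgl.eventually (gt_mem_nhds (show 0 < ε / 4 by linarith))
  have e3 := tendsto_exp_atTop.eventually_ge_atTop (2 * T)
  filter_upwards [e1, e2, e3] with L h1 h2 h3
  by_contra! hno
  have hl := kern_sum_lower hT1 h3
  have hv0 : ∀ n : ℕ, 0 ≤ ArithmeticFunction.vonMangoldt n :=
    fun n => ArithmeticFunction.vonMangoldt_nonneg
  have hhk : ∀ n : ℕ, h n * kern T (log n - L) ≤ (4 / T * (1 + 1 / δ ^ 2)) *
      ((ArithmeticFunction.vonMangoldt n + 1) / (n : ℝ) * (1 / (1 + (log n - L) ^ 2))) := by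
    intro n
    have hv := hv0 n
    by_cases hn : n.Prime ∧ (n : ZMod q) = a
    · have hu := kern_bound' hT0 hδ _ (hno n hn.1 hn.2)
      have hle : h n ≤ (ArithmeticFunction.vonMangoldt n + 1) / (n : ℝ) := by
        simp only [hh, if_pos hn.1]
        gcongr
        linarith [residueClass_le a n]
      calc _ ≤ (ArithmeticFunction.vonMangoldt n + 1) / (n : ℝ) *
            ((4 / T * (1 + 1 / δ ^ 2)) * (1 / (1 + (log n - L) ^ 2))) := by
            have := kern_nonneg hT0 (log n - L)
            gcongr
        _ = _ := by ring
    · have : h n = 0 := by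
        simp only [hh]
        by_cases hp : n.Prime
        · have hna : ¬ (n : ZMod q) = a := fun h => hn ⟨hp, h⟩
          simp [hna]
        · simp [hp]
      rw [this, zero_mul]
      positivity
  have hws : Summable fun n : ℕ => (ArithmeticFunction.vonMangoldt n + 1) / (n : ℝ) *
      (1 / (1 + (log n - L) ^ 2)) := by
    refine summable_of_sum_le (fun n => ?_) (hMb L)
    have := hv0 n
    positivity
  have hhs : Summable fun n : ℕ => h n * kern T (log n - L) :=
    (hws.mul_left _).of_nonneg_of_le (fun n => mul_nonneg (hh0 n) (kern_nonneg hT0 _)) hhk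
  have hhb : ∑' n : ℕ, h n * kern T (log n - L) ≤ D / T := by
    refine (hhs.tsum_le_tsum hhk (hws.mul_left _)).trans ?_
    rw [tsum_mul_left]
    calc _ ≤ (4 / T * (1 + 1 / δ ^ 2)) * M := by
          gcongr
          exact hws.tsum_le_of_sum_le (hMb L)
      _ = D / T := by rw [hD]; ring
  have hks : Summable fun n : ℕ => 1 / (n : ℝ) * kern T (log n - L) := by
    have := summable_weight (c := fun _ => 1)
      (fun n => by have := hv0 n; simp) hT0 L
    simpa using this
  have heq : ∑' n : ℕ, (residueClass a n - A) / (n : ℝ) * kern T (log n - L) =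
      ∑' n : ℕ, g n * kern T (log n - L) + ∑' n : ℕ, h n * kern T (log n - L) -
      A * ∑' n : ℕ, 1 / (n : ℝ) * kern T (log n - L) := by
    rw [← tsum_mul_left, ← (hgsk L).tsum_add hhs, ← ((hgsk L).add hhs).tsum_sub (hks.mul_left A)]
    refine tsum_congr fun n => ?_
    simp only [hg, hh]
    split_ifs <;> ring
  have hl' : ε ≤ A * ∑' n : ℕ, 1 / (n : ℝ) * kern T (log n - L) := by
    rw [hε]; gcongr
  rw [heq] at h1
  linarith

/-- Lemma 1: for `m ≥ 2`, `gcd(a,m) = 1` and real `α > 1`, there is a positive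
integer `m₀` such that for every `n ≥ m₀` the interval `[α^n, α^(n+1)]`
contains a prime `p ≡ a (mod m)`. -/
theorem stmt_8 (a m : ℕ) (hm : 2 ≤ m) (ha : Nat.gcd a m = 1) (α : ℝ) (hα : 1 < α) :
    ∃ m₀ : ℕ, 0 < m₀ ∧ ∀ n : ℕ, m₀ ≤ n →
      ∃ p : ℕ, Nat.Prime p ∧ p % m = a % m ∧ α ^ n ≤ (p : ℝ) ∧ (p : ℝ) ≤ α ^ (n + 1) := by
  haveI : NeZero m := ⟨by omega⟩
  have hu : IsUnit (a : ZMod m) := (ZMod.isUnit_iff_coprime a m).2 ha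
  have hl : 0 < Real.log α := Real.log_pos hα
  have hk := key hu (half_pos hl)
  have ht : Tendsto (fun n : ℕ => (n : ℝ) * Real.log α + Real.log α / 2) atTop atTop :=
    tendsto_atTop_add_const_right _ _ (tendsto_natCast_atTop_atTop.atTop_mul_const hl)
  obtain ⟨N, hN⟩ := eventually_atTop.1 (ht.eventually hk)
  refine ⟨N + 1, by omega, fun n hn => ?_⟩
  obtain ⟨p, hp, hpa, hpl⟩ := hN n (by omega)
  have hp0 : (0 : ℝ) < p := by exact_mod_cast hp.pos
  have hα0 : 0 < α := by linarith
  rw [abs_lt] at hpl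
  refine ⟨p, hp, (ZMod.natCast_eq_natCast_iff' p a m).1 hpa, ?_, ?_⟩
  · rw [← Real.log_le_log_iff (by positivity) hp0, Real.log_pow]
    linarith [hpl.1]
  · rw [← Real.log_le_log_iff hp0 (by positivity), Real.log_pow]
    push_cast
    linarith [hpl.2]
end
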